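/- arXiv:1907.00778 — 2 statements merged into one kernel-verified Lean document; each statement's English description precedes it below -/
import Mathlib

section
/- Assume condition (C3). Then there exist T ∈ (0,∞] and c ∈ [1,∞), with c depending only on d, α₃, c₃ and T = 1/h(T₃/c), such that for every 0 < t < T there exists x_t ∈ ℝ^d with |x_t| ≤ c·h^{-1}(1/t) so that for every y ∈ ℝ^d with |y| ≤ (1/c)·h^{-1}(1/t): p(t, y + x_t + t·b_{h^{-1}(1/t)}) ≥ (1/c)·[h^{-1}(1/t)]^{-d}. Moreover, if T₃ < ∞, then for every T ∈ (0,∞) this conclusion holds with some constant c depending only on d, α₃, c₃, T₃, T and h. -/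
/-!
The density is bounded below on a ball of radius comparable to `r = h⁻¹(1/t)` by a soft argument
that uses only the Fourier integral defining it; neither existence nor positivity of the measures
`P_t` is needed.

Fix `R = M r` with a constant `M ≥ 1`. Moving the truncation level of the small jumps from `1` to
`R` turns `ψ` into a centred exponent `Ψ_R` plus a drift `b_R`, and
`|Ψ_R(x)| ≤ (2 + 3 R² |x|²) h(R)` (`IsLevyPair.norm_psiCent_le`). Averaging the inversion formula
for `e^{-tΨ_R}` against a Gaussian of width `R` therefore gives at least `1/2` once `t h(R)` is
small (`integral_invF_gauss_ge`).

The comparison `h(1/s) ≍ ψ*(s)` (`IsLevyPair.psiStar_le`, `IsLevyPair.concFn_le`) transports the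
scaling condition on `ψ*` to `h`. It shows that `t h(M r)` is small for a suitable `M` depending on
`d`, `α₃`, `c₃` (`IsLevyPair.concFn_ratio_le`), and that `e^{-t Re ψ}` decays like a stretched
exponential on the scale `1/r`, so that the density is bounded by `C r^{-d}` and is Lipschitz with
constant `C r^{-d-1}` (`IsLevyPair.integral_exp_le`).

Comparing the Gaussian of width `R` with the one of width `2 R` produces a point `u` where the
density is at least a multiple of `r^{-d} e^{κ |u|²/R²}`, with `κ > 0` an absolute constant. Since
the density is at most `C r^{-d}`, this forces `|u| = O(r)`; the Lipschitz bound extends the lower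
bound to a ball around `u` (`exists_ball_invF_ge`). The
replacement of `b_R` by `b_r` costs `t |b_R - b_r| ≤ t R h(r) = M r`, which is absorbed in `x_t`
(`IsLevyPair.norm_bshift_sub_le`).

For `t` in a compact subset of `(0, ∞)` the function `e^{-t Re ψ}` is dominated by its value at an
earlier time `t₁` within the range of the scaling condition, and monotonicity of `h` replaces
scaling (`IsLevyPair.densityLower_long`).
-/

open MeasureTheory Filter Set
open scoped RealInnerProductSpace ENNReal Topology

noncomputable section

abbrev Ed (d : ℕ) := EuclideanSpace ℝ (Fin d)

/-- The concentration function `h`. -/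
def concFn (d : ℕ) (A : Ed d →L[ℝ] Ed d) (ν : Measure (Ed d)) (r : ℝ) : ℝ :=
  ‖A‖ / r ^ 2 + ∫ z, min 1 (‖z‖ ^ 2 / r ^ 2) ∂ν

/-- The function `K`. -/
def KFn (d : ℕ) (A : Ed d →L[ℝ] Ed d) (ν : Measure (Ed d)) (r : ℝ) : ℝ :=
  ‖A‖ / r ^ 2 + (∫ z in {z : Ed d | ‖z‖ < r}, ‖z‖ ^ 2 ∂ν) / r ^ 2

/-- Context hypotheses on the pair `(A, ν)`. -/
structure IsLevyPair (d : ℕ) (A : Ed d →L[ℝ] Ed d) (ν : Measure (Ed d)) : Prop where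
  symm : ∀ x y : Ed d, ⟪A x, y⟫ = ⟪x, A y⟫
  nonneg : ∀ x : Ed d, 0 ≤ ⟪x, A x⟫
  nu_zero : ν ({0} : Set (Ed d)) = 0
  nu_int : Integrable (fun z : Ed d => min 1 (‖z‖ ^ 2)) ν
  h_lim : Tendsto (concFn d A ν) (𝓝[>] (0 : ℝ)) atTop

/-- `g` is the (two-sided) inverse of `f` on `(0,∞)`. -/
structure IsInvOn (f g : ℝ → ℝ) : Prop where
  pos : ∀ u : ℝ, 0 < u → 0 < g u
  right_inv : ∀ u : ℝ, 0 < u → f (g u) = u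
  left_inv : ∀ r : ℝ, 0 < r → g (f r) = r

/-- Real part of the characteristic exponent. -/
def rePsi (d : ℕ) (A : Ed d →L[ℝ] Ed d) (ν : Measure (Ed d)) (x : Ed d) : ℝ :=
  ⟪x, A x⟫ + ∫ z, (1 - Real.cos ⟪x, z⟫) ∂ν

/-- The radial non-decreasing majorant ψ*. -/
def psiStar (d : ℕ) (A : Ed d →L[ℝ] Ed d) (ν : Measure (Ed d)) (r : ℝ) : ℝ :=
  sSup (rePsi d A ν '' Metric.closedBall 0 r)

/-- Condition (C3). -/
def CondC3 (d : ℕ) (A : Ed d →L[ℝ] Ed d) (ν : Measure (Ed d)) (T : ℝ≥0∞) (c α : ℝ) :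
    Prop :=
  (∀ x : Ed d, 1 / T < ENNReal.ofReal ‖x‖ → c * psiStar d A ν ‖x‖ ≤ rePsi d A ν x) ∧
    ∀ lam r : ℝ, 1 ≤ lam → 0 < r → 1 / T < ENNReal.ofReal r →
      c * lam ^ α * psiStar d A ν r ≤ psiStar d A ν (lam * r)

/-- Condition (A1): weak lower scaling of `h` at zero. -/
def ScalA1 (h : ℝ → ℝ) (α C : ℝ) (θ : ℝ≥0∞) : Prop :=
  ∀ lam r : ℝ, 0 < lam → lam ≤ 1 → 0 < r → ENNReal.ofReal r < θ →
    h r ≤ C * lam ^ α * h (lam * r)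

/-- The shifted drift `b_r`. -/
def bshift (d : ℕ) (ν : Measure (Ed d)) (b : Ed d) (r : ℝ) : Ed d :=
  b + ∫ z, (Set.indicator {w : Ed d | ‖w‖ < r} (fun w => w) z
      - Set.indicator {w : Ed d | ‖w‖ < 1} (fun w => w) z) ∂ν

/-- The characteristic exponent of the triplet `(A, ν, b)`. -/
def psiFn (d : ℕ) (A : Ed d →L[ℝ] Ed d) (ν : Measure (Ed d)) (b : Ed d) (x : Ed d) : ℂ :=
  ((⟪x, A x⟫ : ℝ) : ℂ) - Complex.I * ((⟪x, b⟫ : ℝ) : ℂ) -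
    ∫ z, (Complex.exp (Complex.I * ((⟪x, z⟫ : ℝ) : ℂ)) - 1 -
      Complex.I * ((⟪x, z⟫ : ℝ) : ℂ)
        * Set.indicator {w : Ed d | ‖w‖ < 1} (fun _ => (1 : ℂ)) z) ∂ν

/-- The transition density, defined by Fourier inversion. -/
def pdens (d : ℕ) (A : Ed d →L[ℝ] Ed d) (ν : Measure (Ed d)) (b : Ed d)
    (t : ℝ) (x : Ed d) : ℝ :=
  ((2 * Real.pi) ^ d)⁻¹ *
    (∫ z : Ed d, Complex.exp (-(Complex.I * ((⟪x, z⟫ : ℝ) : ℂ))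
        - (t : ℂ) * psiFn d A ν b z)).re



/-! ### The Lévy measure and the concentration function -/

section LevyMeasure

variable {d : ℕ} {A : Ed d →L[ℝ] Ed d} {ν : Measure (Ed d)}

/-- A Lévy measure is s-finite, because it has no atom at `0` and integrates a function that
vanishes only there. This makes Fubini's theorem available for `ν`. -/
theorem IsLevyPair.sfinite (h : IsLevyPair d A ν) : SFinite ν := by
  obtain ⟨t, ht, h0, hs⟩ := h.nu_int.aefinStronglyMeasurable.exists_set_sigmaFinite
  have h1 : ν.restrict tᶜ = 0 := by
    have h2 : ∀ᵐ z ∂ν, z ≠ 0 := by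
      rw [ae_iff]; simpa using h.nu_zero
    have h3 : ∀ᵐ z ∂(ν.restrict tᶜ), False := by
      filter_upwards [h0, ae_restrict_of_ae h2] with z hz hz0
      have : 0 < ‖z‖ := norm_pos_iff.2 hz0
      have h4 : 0 < min 1 (‖z‖ ^ 2) := by positivity
      simp only [Pi.zero_apply] at hz
      linarith
    rw [← ae_eq_bot]
    exact Filter.eventually_false_iff_eq_bot.1 h3
  have h5 : ν = ν.restrict t := by
    conv_lhs => rw [← Measure.restrict_add_restrict_compl (μ := ν) ht, h1, add_zero]
  rw [h5]; infer_instance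

theorem min_scale_le {r a : ℝ} (hr : 0 < r) (ha : 0 ≤ a) :
    min 1 (a / r ^ 2) ≤ (1 + 1 / r ^ 2) * min 1 a := by
  have h1 : 0 < 1 / r ^ 2 := by positivity
  rcases le_total 1 a with h | h
  · rw [min_eq_left h]
    exact (min_le_left _ _).trans (by linarith)
  · rw [min_eq_right h]
    refine (min_le_right _ _).trans ?_
    rw [div_eq_mul_one_div]
    nlinarith

theorem IsLevyPair.integrable_min (h : IsLevyPair d A ν) {r : ℝ} (hr : 0 < r) :
    Integrable (fun z : Ed d => min 1 (‖z‖ ^ 2 / r ^ 2)) ν := by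
  refine (h.nu_int.const_mul (1 + 1 / r ^ 2)).mono' (by fun_prop) (Eventually.of_forall ?_)
  intro z
  rw [Real.norm_of_nonneg (by positivity)]
  exact min_scale_le hr (by positivity)

theorem concFn_nonneg {r : ℝ} : 0 ≤ concFn d A ν r :=
  add_nonneg (by positivity) (integral_nonneg fun z => by positivity)

theorem IsLevyPair.concFn_anti (h : IsLevyPair d A ν) {r s : ℝ} (hr : 0 < r) (hrs : r ≤ s) :
    concFn d A ν s ≤ concFn d A ν r := by
  refine add_le_add (by gcongr)
    (integral_mono (h.integrable_min (hr.trans_le hrs)) (h.integrable_min hr) fun z => ?_)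
  dsimp only
  gcongr

theorem IsInvOn.concFn_pos {g : ℝ → ℝ} (h : IsLevyPair d A ν) (hg : IsInvOn (concFn d A ν) g)
    {r : ℝ} (hr : 0 < r) : 0 < concFn d A ν r := by
  refine lt_of_le_of_ne concFn_nonneg fun h0 => ?_
  have h1 : concFn d A ν (2 * r) = 0 :=
    le_antisymm (h0 ▸ h.concFn_anti hr (by linarith)) concFn_nonneg
  have h2 := hg.left_inv r hr
  have h3 := hg.left_inv (2 * r) (by linarith)
  rw [h1] at h3
  rw [← h0] at h2
  linarith

/-- `h` reverses strict inequalities, being antitone and injective on `(0,∞)`. -/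
theorem IsInvOn.concFn_strictAnti {g : ℝ → ℝ} (h : IsLevyPair d A ν)
    (hg : IsInvOn (concFn d A ν) g) {r s : ℝ} (hr : 0 < r) (hrs : r < s) :
    concFn d A ν s < concFn d A ν r := by
  refine lt_of_le_of_ne (h.concFn_anti hr hrs.le) fun h0 => ?_
  have h2 := hg.left_inv r hr
  have h3 := hg.left_inv s (hr.trans hrs)
  rw [h0] at h3
  linarith

theorem IsLevyPair.lt_of_concFn_lt (h : IsLevyPair d A ν) {r s : ℝ} (hs : 0 < s)
    (hlt : concFn d A ν s < concFn d A ν r) : r < s := by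
  by_contra! hle
  exact absurd (h.concFn_anti hs hle) (not_le.2 hlt)

/-! ### The characteristic exponent -/

/-- The integrand of the Lévy–Khintchine formula, compensated on the ball of radius `R`. -/
def lkKer (R : ℝ) (x z : Ed d) : ℂ :=
  Complex.exp (Complex.I * ((⟪x, z⟫ : ℝ) : ℂ)) - 1 -
    Complex.I * ((⟪x, z⟫ : ℝ) : ℂ) * Set.indicator {w : Ed d | ‖w‖ < R} (fun _ => (1 : ℂ)) z

/-- The characteristic exponent of the process recentred by the drift `b_R`. -/
def psiCent (A : Ed d →L[ℝ] Ed d) (ν : Measure (Ed d)) (R : ℝ) (x : Ed d) : ℂ :=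
  ((⟪x, A x⟫ : ℝ) : ℂ) - ∫ z, lkKer R x z ∂ν

theorem norm_exp_sub_one_sub_le (a : ℝ) :
    ‖Complex.exp (Complex.I * (a : ℂ)) - 1 - Complex.I * (a : ℂ)‖ ≤ 3 * a ^ 2 := by
  rcases le_total |a| 1 with h | h
  · have h1 : ‖Complex.I * (a : ℂ)‖ = |a| := by simp
    have := Complex.norm_exp_sub_one_sub_id_le (x := Complex.I * (a : ℂ)) (by rwa [h1])
    rw [h1, sq_abs] at this
    nlinarith [sq_nonneg a]
  · have h1 : ‖Complex.exp (Complex.I * (a : ℂ)) - 1‖ ≤ |a| :=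
      Real.norm_exp_I_mul_ofReal_sub_one_le
    have h2 : ‖Complex.I * (a : ℂ)‖ = |a| := by simp
    have h3 := norm_sub_le (Complex.exp (Complex.I * (a : ℂ)) - 1) (Complex.I * (a : ℂ))
    have h4 : |a| ≤ a ^ 2 := by rw [← sq_abs]; nlinarith
    linarith [sq_nonneg a]

theorem norm_exp_sub_one_le_two (a : ℝ) : ‖Complex.exp (Complex.I * (a : ℂ)) - 1‖ ≤ 2 := by
  have h := norm_sub_le (Complex.exp (Complex.I * (a : ℂ))) 1
  rw [mul_comm, Complex.norm_exp_ofReal_mul_I, norm_one] at h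
  rw [mul_comm]; linarith

theorem lkKer_bound {R : ℝ} (hR : 0 < R) (x z : Ed d) :
    ‖lkKer R x z‖ ≤ (2 + 3 * (R ^ 2 * ‖x‖ ^ 2)) * min 1 (‖z‖ ^ 2 / R ^ 2) := by
  have hR2 : 0 < R ^ 2 := by positivity
  have h0 : 0 ≤ R ^ 2 * ‖x‖ ^ 2 := by positivity
  by_cases hz : ‖z‖ < R
  · have h1 : ‖z‖ ^ 2 / R ^ 2 ≤ 1 := by
      rw [div_le_one hR2]; gcongr
    rw [min_eq_right h1, lkKer, Set.indicator_of_mem (by exact hz), mul_one]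
    refine (norm_exp_sub_one_sub_le _).trans ?_
    have h2 : ⟪x, z⟫ ^ 2 ≤ ‖x‖ ^ 2 * ‖z‖ ^ 2 := by
      rw [← mul_pow, ← sq_abs]; gcongr; exact abs_real_inner_le_norm x z
    have h3 : ‖x‖ ^ 2 * ‖z‖ ^ 2 = R ^ 2 * ‖x‖ ^ 2 * (‖z‖ ^ 2 / R ^ 2) := by field_simp
    have h4 : 0 ≤ ‖z‖ ^ 2 / R ^ 2 := by positivity
    nlinarith
  · have h1 : 1 ≤ ‖z‖ ^ 2 / R ^ 2 := by
      rw [one_le_div hR2]; push Not at hz; gcongr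
    rw [min_eq_left h1, lkKer, Set.indicator_of_notMem (by exact hz), mul_zero, sub_zero]
    linarith [norm_exp_sub_one_le_two ⟪x, z⟫]

theorem measurable_lkKer (R : ℝ) : Measurable (Function.uncurry (lkKer (d := d) R)) := by
  have h1 : Measurable (fun p : Ed d × Ed d =>
      Set.indicator {w : Ed d | ‖w‖ < R} (fun _ => (1 : ℂ)) p.2) :=
    (measurable_const.indicator (measurableSet_lt (by fun_prop) (by fun_prop))).comp measurable_snd
  have h2 : Measurable (fun p : Ed d × Ed d => ((⟪p.1, p.2⟫ : ℝ) : ℂ)) :=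
    Continuous.measurable (by fun_prop)
  unfold lkKer Function.uncurry
  fun_prop

theorem IsLevyPair.integrable_lkKer (h : IsLevyPair d A ν) {R : ℝ} (hR : 0 < R) (x : Ed d) :
    Integrable (lkKer R x) ν :=
  ((h.integrable_min hR).const_mul _).mono'
    ((measurable_lkKer R).comp measurable_prodMk_left).aestronglyMeasurable
    (Eventually.of_forall fun z => lkKer_bound hR x z)

theorem IsLevyPair.measurable_psiCent (h : IsLevyPair d A ν) (R : ℝ) :
    Measurable (psiCent A ν R) := by
  have := h.sfinite
  have h1 : Measurable (fun x : Ed d => ((⟪x, A x⟫ : ℝ) : ℂ)) := Continuous.measurable (by fun_prop)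
  exact h1.sub ((measurable_lkKer R).stronglyMeasurable.integral_prod_right).measurable

/-- The scale `R` is natural for the recentred exponent: up to a quadratic factor in `R‖x‖`, it is
controlled by `h(R)`. -/
theorem IsLevyPair.norm_psiCent_le (h : IsLevyPair d A ν) {R : ℝ} (hR : 0 < R) (x : Ed d) :
    ‖psiCent A ν R x‖ ≤ (2 + 3 * (R ^ 2 * ‖x‖ ^ 2)) * concFn d A ν R := by
  have h1 : ‖∫ z, lkKer R x z ∂ν‖ ≤
      (2 + 3 * (R ^ 2 * ‖x‖ ^ 2)) * ∫ z, min 1 (‖z‖ ^ 2 / R ^ 2) ∂ν := by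
    rw [← integral_const_mul]
    exact norm_integral_le_of_norm_le ((h.integrable_min hR).const_mul _)
      (Eventually.of_forall fun z => lkKer_bound hR x z)
  have h2 : ‖((⟪x, A x⟫ : ℝ) : ℂ)‖ ≤ (2 + 3 * (R ^ 2 * ‖x‖ ^ 2)) * (‖A‖ / R ^ 2) := by
    rw [Complex.norm_real]
    have h3 : ‖⟪x, A x⟫‖ ≤ ‖x‖ * (‖A‖ * ‖x‖) :=
      (norm_inner_le_norm x (A x)).trans (by gcongr; exact A.le_opNorm x)
    have h4 : ‖x‖ * (‖A‖ * ‖x‖) = (R ^ 2 * ‖x‖ ^ 2) * (‖A‖ / R ^ 2) := by field_simp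
    refine h3.trans (h4.trans_le ?_)
    gcongr
    nlinarith [show 0 ≤ R ^ 2 * ‖x‖ ^ 2 by positivity]
  unfold psiCent concFn
  rw [mul_add]
  exact (norm_sub_le _ _).trans (add_le_add h2 h1)

theorem IsLevyPair.re_psiCent (h : IsLevyPair d A ν) {R : ℝ} (hR : 0 < R) (x : Ed d) :
    (psiCent A ν R x).re = rePsi d A ν x := by
  have h1 := integral_re (𝕜 := ℂ) (h.integrable_lkKer hR x)
  have h2 : ∀ z, RCLike.re (lkKer R x z) = -(1 - Real.cos ⟪x, z⟫) := by
    intro z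
    have h3 : (Complex.exp (Complex.I * ((⟪x, z⟫ : ℝ) : ℂ))).re = Real.cos ⟪x, z⟫ := by
      rw [mul_comm, Complex.exp_ofReal_mul_I_re]
    have h4 : (Complex.I * ((⟪x, z⟫ : ℝ) : ℂ) *
        Set.indicator {w : Ed d | ‖w‖ < R} (fun _ => (1 : ℂ)) z).re = 0 := by
      by_cases hz : z ∈ {w : Ed d | ‖w‖ < R} <;> simp [hz]
    change (lkKer R x z).re = _
    rw [lkKer, Complex.sub_re, Complex.sub_re, h3, h4, Complex.one_re]; ring
  simp only [h2, integral_neg] at h1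
  change _ = (∫ z, lkKer R x z ∂ν).re at h1
  rw [psiCent, Complex.sub_re, ← h1, rePsi, Complex.ofReal_re]; ring

theorem IsLevyPair.rePsi_nonneg (h : IsLevyPair d A ν) (x : Ed d) : 0 ≤ rePsi d A ν x :=
  add_nonneg (h.nonneg x) (integral_nonneg fun z => sub_nonneg.2 (Real.cos_le_one ⟪x, z⟫))

theorem IsLevyPair.integrable_shift (h : IsLevyPair d A ν) {r R : ℝ} (hr : 0 < r) (hR : 0 < R) :
    Integrable (fun z : Ed d => Set.indicator {w : Ed d | ‖w‖ < R} (fun w => w) z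
      - Set.indicator {w : Ed d | ‖w‖ < r} (fun w => w) z) ν := by
  have hm : ∀ s : ℝ, Measurable (fun z : Ed d => Set.indicator {w : Ed d | ‖w‖ < s} (fun w => w) z) :=
    fun s => measurable_id.indicator (measurableSet_lt (by fun_prop) (by fun_prop))
  refine ((h.integrable_min (lt_min hr hR)).const_mul (max r R)).mono'
    ((hm R).sub (hm r)).aestronglyMeasurable (Eventually.of_forall fun z => ?_)
  have h0 : 0 ≤ max r R * min 1 (‖z‖ ^ 2 / min r R ^ 2) := by positivity
  have h3 : ∀ s, min r R ≤ s → ¬ ‖z‖ < s → min 1 (‖z‖ ^ 2 / min r R ^ 2) = 1 := by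
    intro s hs hz
    refine min_eq_left ((one_le_div (by positivity)).2 ?_)
    gcongr
    exact hs.trans (not_lt.1 hz)
  by_cases h1 : ‖z‖ < r <;> by_cases h2 : ‖z‖ < R
  · simpa [h1, h2] using h0
  · rw [h3 R (min_le_right _ _) h2]
    simp [h1, h2, h1.le]
  · rw [h3 r (min_le_left _ _) h1]
    simp [h1, h2, h2.le]
  · simpa [h1, h2] using h0

theorem IsLevyPair.psiFn_eq (h : IsLevyPair d A ν) (b : Ed d) {R : ℝ} (hR : 0 < R) (x : Ed d) :
    psiFn d A ν b x = psiCent A ν R x - Complex.I * ((⟪x, bshift d ν b R⟫ : ℝ) : ℂ) := by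
  have hs := h.integrable_shift one_pos hR
  have h1 : (⟪x, bshift d ν b R⟫ : ℝ) = ⟪x, b⟫ + ∫ z, ⟪x, Set.indicator {w : Ed d | ‖w‖ < R} (fun w => w) z
      - Set.indicator {w : Ed d | ‖w‖ < 1} (fun w => w) z⟫ ∂ν := by
    rw [bshift, inner_add_right, integral_inner hs]
  have h2 : ∫ z, lkKer 1 x z ∂ν - ∫ z, lkKer R x z ∂ν =
      Complex.I * ((∫ z, ⟪x, Set.indicator {w : Ed d | ‖w‖ < R} (fun w => w) z
      - Set.indicator {w : Ed d | ‖w‖ < 1} (fun w => w) z⟫ ∂ν : ℝ) : ℂ) := by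
    rw [← integral_sub (h.integrable_lkKer one_pos x) (h.integrable_lkKer hR x),
      ← integral_complex_ofReal, ← integral_const_mul]
    refine integral_congr_ae (Eventually.of_forall fun z => ?_)
    by_cases hz1 : ‖z‖ < 1 <;> by_cases hz2 : ‖z‖ < R <;> simp [lkKer, hz1, hz2]
  have h3 : psiFn d A ν b x = ((⟪x, A x⟫ : ℝ) : ℂ) - Complex.I * ((⟪x, b⟫ : ℝ) : ℂ)
      - ∫ z, lkKer 1 x z ∂ν := rfl
  rw [h3, h1, psiCent, Complex.ofReal_add, mul_add, ← h2]; ring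

/-- `|b_R - b_r| ≤ R h(r)`: only jumps of size between `r` and `R` contribute. -/
theorem IsLevyPair.norm_bshift_sub_le (h : IsLevyPair d A ν) (b : Ed d) {r R : ℝ} (hr : 0 < r)
    (hrR : r ≤ R) : ‖bshift d ν b R - bshift d ν b r‖ ≤ R * concFn d A ν r := by
  have hR := hr.trans_le hrR
  rw [bshift, bshift, add_sub_add_left_eq_sub,
    ← integral_sub (h.integrable_shift one_pos hR) (h.integrable_shift one_pos hr)]
  have h1 : R * ∫ z, min 1 (‖z‖ ^ 2 / r ^ 2) ∂ν ≤ R * concFn d A ν r := by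
    unfold concFn
    gcongr
    have : 0 ≤ ‖A‖ / r ^ 2 := by positivity
    linarith
  refine le_trans ?_ h1
  rw [← integral_const_mul]
  refine norm_integral_le_of_norm_le ((h.integrable_min hr).const_mul R)
    (Eventually.of_forall fun z => ?_)
  rw [sub_sub_sub_cancel_right]
  have h0 : 0 ≤ R * min 1 (‖z‖ ^ 2 / r ^ 2) := by positivity
  by_cases h1 : ‖z‖ < r
  · simpa [h1, h1.trans_le hrR] using h0
  · by_cases h2 : ‖z‖ < R
    · have h3 : 1 ≤ ‖z‖ ^ 2 / r ^ 2 := by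
        rw [one_le_div (by positivity)]
        gcongr
        exact not_lt.1 h1
      rw [min_eq_left h3]
      simp [h1, h2, h2.le]
    · simpa [h1, h2] using h0

end LevyMeasure

/-! ### Comparison of the concentration function with the majorant `ψ*` -/

section Comparison

variable {d : ℕ} {A : Ed d →L[ℝ] Ed d} {ν : Measure (Ed d)}

theorem IsLevyPair.rePsi_le (h : IsLevyPair d A ν) {s : ℝ} (hs : 0 < s) {x : Ed d}
    (hx : ‖x‖ ≤ s) : rePsi d A ν x ≤ 5 * concFn d A ν (1 / s) := by
  have hR : 0 < 1 / s := by positivity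
  rw [← h.re_psiCent hR]
  refine (Complex.re_le_norm _).trans ((h.norm_psiCent_le hR x).trans ?_)
  have h1 : (1 / s) ^ 2 * ‖x‖ ^ 2 ≤ 1 := by
    rw [← mul_pow]
    refine pow_le_one₀ (by positivity) ?_
    rw [one_div, inv_mul_le_iff₀ hs]; linarith
  have h2 : 0 ≤ concFn d A ν (1 / s) := concFn_nonneg
  gcongr
  linarith

theorem IsLevyPair.le_psiStar (h : IsLevyPair d A ν) {s : ℝ} (hs : 0 < s) {x : Ed d}
    (hx : ‖x‖ ≤ s) : rePsi d A ν x ≤ psiStar d A ν s := by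
  refine le_csSup ⟨5 * concFn d A ν (1 / s), ?_⟩ ⟨x, by simpa using hx, rfl⟩
  rintro _ ⟨y, hy, rfl⟩
  exact h.rePsi_le hs (by simpa using hy)

theorem IsLevyPair.psiStar_le (h : IsLevyPair d A ν) {s : ℝ} (hs : 0 < s) :
    psiStar d A ν s ≤ 5 * concFn d A ν (1 / s) := by
  refine csSup_le (Set.Nonempty.image _ ⟨0, by simp [hs.le]⟩) ?_
  rintro _ ⟨y, hy, rfl⟩
  exact h.rePsi_le hs (by simpa using hy)

theorem IsLevyPair.psiStar_nonneg (h : IsLevyPair d A ν) {s : ℝ} (hs : 0 < s) :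
    0 ≤ psiStar d A ν s :=
  (h.rePsi_nonneg 0).trans (h.le_psiStar hs (by simpa using hs.le))

/-- The operator norm of a symmetric non-negative operator is the supremum of its quadratic form on
the unit sphere; the quadratic form is dominated by the real part of the exponent. -/
theorem IsLevyPair.opNorm_le (h : IsLevyPair d A ν) {s : ℝ} (hs : 0 < s) :
    ‖A‖ * s ^ 2 ≤ psiStar d A ν s := by
  set M := psiStar d A ν s / s ^ 2 with hM
  have hM0 : 0 ≤ M := div_nonneg (h.psiStar_nonneg hs) (by positivity)
  have hq : ∀ v : Ed d, ⟪v, A v⟫ ≤ M * ‖v‖ ^ 2 := by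
    intro v
    rcases eq_or_ne v 0 with rfl | hv
    · simp
    have hv' : 0 < ‖v‖ := norm_pos_iff.2 hv
    have h1 : ⟪(s / ‖v‖) • v, A ((s / ‖v‖) • v)⟫ ≤ psiStar d A ν s := by
      have h2 := h.le_psiStar hs (x := (s / ‖v‖) • v) (by
        rw [norm_smul, Real.norm_of_nonneg (by positivity)]; field_simp; exact le_rfl)
      have h3 : 0 ≤ ∫ z, (1 - Real.cos ⟪(s / ‖v‖) • v, z⟫) ∂ν :=
        integral_nonneg fun z => sub_nonneg.2 (Real.cos_le_one _)
      unfold rePsi at h2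
      linarith
    rw [map_smul, inner_smul_left, inner_smul_right] at h1
    simp only [conj_trivial] at h1
    have h4 : s / ‖v‖ * (s / ‖v‖ * ⟪v, A v⟫) = s ^ 2 / ‖v‖ ^ 2 * ⟪v, A v⟫ := by ring
    rw [h4, div_mul_eq_mul_div, div_le_iff₀ (by positivity)] at h1
    rw [hM, div_mul_eq_mul_div, le_div_iff₀ (by positivity)]
    linarith
  have hA : ‖A‖ ≤ M := by
    refine A.opNorm_le_bound hM0 fun y => ?_
    rcases eq_or_ne y 0 with rfl | hy
    · simp
    rcases eq_or_ne (A y) 0 with hAy | hAy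
    · rw [hAy, norm_zero]; positivity
    have hy' : 0 < ‖y‖ := norm_pos_iff.2 hy
    have hAy' : 0 < ‖A y‖ := norm_pos_iff.2 hAy
    -- polarize with `x` parallel to `A y` and of the same length as `y`
    set x : Ed d := (‖y‖ / ‖A y‖) • A y with hx
    have hxn : ‖x‖ = ‖y‖ := by
      rw [hx, norm_smul, Real.norm_of_nonneg (by positivity)]; field_simp
    have h1 : ⟪x, A y⟫ = ‖y‖ * ‖A y‖ := by
      rw [hx, inner_smul_left, real_inner_self_eq_norm_sq]
      simp only [conj_trivial]; field_simp
    have h2 : ⟪y, A x⟫ = ⟪x, A y⟫ := by rw [← h.symm, real_inner_comm]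
    have h3 := hq (x + y)
    have h4 := h.nonneg (x - y)
    rw [map_add, inner_add_left, inner_add_right, inner_add_right, h2, h1] at h3
    rw [map_sub, inner_sub_left, inner_sub_right, inner_sub_right, h2, h1] at h4
    have h5 : ‖x + y‖ ^ 2 ≤ (2 * ‖y‖) ^ 2 := by
      gcongr
      linarith [norm_add_le x y]
    have h6 := hq x
    have h7 := hq y
    rw [hxn] at h6
    have h8 : ‖y‖ * ‖A y‖ ≤ ‖y‖ * (M * ‖y‖) := by nlinarith
    exact le_of_mul_le_mul_left h8 hy'
  calc ‖A‖ * s ^ 2 ≤ M * s ^ 2 := by gcongr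
    _ = psiStar d A ν s := by rw [hM]; field_simp

theorem sin_le_sub_cube {x : ℝ} (h0 : 0 ≤ x) (h1 : x ≤ 1) : Real.sin x ≤ x - x ^ 3 / 10 := by
  have h := abs_le.1 (Real.sin_bound (x := x) (by rwa [abs_of_nonneg h0]))
  rw [abs_of_nonneg h0] at h
  have : x ^ 5 ≤ x ^ 3 := pow_le_pow_of_le_one h0 h1 (by norm_num)
  have : 0 ≤ x ^ 3 := by positivity
  linarith [h.2]

theorem sin_le_sub_mul_min {x : ℝ} (h0 : 0 < x) :
    Real.sin x ≤ x - x * (min 1 (x ^ 2) / 40) := by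
  rcases le_total x 2 with h | h
  · have h1 := sin_le_sub_cube (x := x / 2) (by linarith) (by linarith)
    have h2 : Real.sin x ≤ 2 * Real.sin (x / 2) := by
      have h3 : 0 ≤ Real.sin (x / 2) :=
        Real.sin_nonneg_of_nonneg_of_le_pi (by linarith) (by linarith [Real.pi_gt_three])
      have h4 := Real.cos_le_one (x / 2)
      have h5 := Real.sin_two_mul (x / 2)
      rw [mul_div_cancel₀ x two_ne_zero] at h5
      rw [h5]; nlinarith
    have h6 : x * min 1 (x ^ 2) ≤ x * x ^ 2 := by gcongr; exact min_le_right _ _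
    nlinarith
  · have h1 := Real.sin_le_one x
    have h2 : x * min 1 (x ^ 2) ≤ x * 1 := by gcongr; exact min_le_left _ _
    linarith

/-- Averaging `1 - cos` over a segment gives a lower bound by the truncated square. -/
theorem integral_one_sub_cos_ge (a : ℝ) :
    min 1 (a ^ 2) / 40 ≤ ∫ x in (0 : ℝ)..1, (1 - Real.cos (x * a)) := by
  rcases eq_or_ne a 0 with rfl | ha
  · simp
  have h1 : ∫ x in (0 : ℝ)..1, (1 - Real.cos (x * a)) = 1 - Real.sin a / a := by
    rw [intervalIntegral.integral_sub (by simp) (Continuous.intervalIntegrable (by fun_prop) _ _),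
      intervalIntegral.integral_comp_mul_right (fun x => Real.cos x) ha]
    simp [div_eq_inv_mul]
  rw [h1]
  have key : ∀ x : ℝ, 0 < x → min 1 (x ^ 2) / 40 ≤ 1 - Real.sin x / x := by
    intro x hx
    have := sin_le_sub_mul_min hx
    have h2 : Real.sin x / x ≤ (x - x * (min 1 (x ^ 2) / 40)) / x := by gcongr
    have h3 : (x - x * (min 1 (x ^ 2) / 40)) / x = 1 - min 1 (x ^ 2) / 40 := by field_simp
    linarith
  rcases lt_or_gt_of_ne ha with h | h
  · have := key (-a) (by linarith)
    rwa [Real.sin_neg, neg_div_neg_eq, neg_sq] at this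
  · exact key a h

theorem min_sum_le {ι : Type*} (s : Finset ι) (f : ι → ℝ) (hf : ∀ i ∈ s, 0 ≤ f i) :
    min 1 (∑ i ∈ s, f i) ≤ ∑ i ∈ s, min 1 (f i) := by
  have h0 : ∀ i ∈ s, 0 ≤ min 1 (f i) := fun i hi => le_min zero_le_one (hf i hi)
  by_cases h : ∃ i ∈ s, 1 ≤ f i
  · obtain ⟨i, hi, h1⟩ := h
    calc min 1 (∑ i ∈ s, f i) ≤ 1 := min_le_left _ _
      _ = min 1 (f i) := (min_eq_left h1).symm
      _ ≤ _ := Finset.single_le_sum h0 hi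
  · push Not at h
    refine (min_le_right _ _).trans (Finset.sum_le_sum fun i hi => ?_)
    rw [min_eq_right (h i hi).le]

theorem sq_coord_le (z : Ed d) (j : Fin d) : z j ^ 2 ≤ ‖z‖ ^ 2 := by
  rw [← sq_abs, ← Real.norm_eq_abs]
  gcongr
  exact PiLp.norm_apply_le z j

theorem IsLevyPair.integrable_coord (h : IsLevyPair d A ν) {s : ℝ} (hs : 0 < s) (j : Fin d) :
    Integrable (fun z : Ed d => min 1 ((s * z j) ^ 2)) ν := by
  have hs' : 0 < 1 / s := by positivity
  refine (h.integrable_min hs').mono' (by fun_prop) (Eventually.of_forall fun z => ?_)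
  rw [Real.norm_of_nonneg (by positivity)]
  gcongr
  rw [one_div, inv_pow, div_inv_eq_mul, mul_pow, mul_comm]
  exact mul_le_mul_of_nonneg_right (sq_coord_le z j) (by positivity)

/-- Averaging `Re ψ` over a segment of length `s` in the `j`-th coordinate direction. -/
theorem IsLevyPair.integral_coord_le (h : IsLevyPair d A ν) {s : ℝ} (hs : 0 < s) (j : Fin d) :
    ∫ z : Ed d, min 1 ((s * z j) ^ 2) ∂ν ≤ 40 * psiStar d A ν s := by
  have := h.sfinite
  have hs' : 0 < 1 / s := by positivity
  set e : Ed d := EuclideanSpace.single j (1 : ℝ) with he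
  have hin : ∀ (x : ℝ) (z : Ed d), ⟪(x * s) • e, z⟫ = x * (s * z j) := by
    intro x z
    rw [inner_smul_left, he, EuclideanSpace.inner_single_left]; simp; ring
  have hcont : Continuous fun p : ℝ × Ed d => 1 - Real.cos (p.1 * (s * p.2 j)) := by fun_prop
  have hint1 := h.integrable_coord hs j
  have hint2 : Integrable (Function.uncurry fun (x : ℝ) (z : Ed d) => 1 - Real.cos (x * (s * z j)))
      ((volume.restrict (Ioc (0 : ℝ) 1)).prod ν) := by
    refine (((h.integrable_min hs').const_mul 5).comp_snd
      (volume.restrict (Ioc (0 : ℝ) 1))).mono' hcont.aestronglyMeasurable ?_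
    have hmem : ∀ᵐ p ∂((volume.restrict (Ioc (0 : ℝ) 1)).prod ν), p.1 ∈ Ioc (0 : ℝ) 1 :=
      Measure.quasiMeasurePreserving_fst.ae (ae_restrict_mem measurableSet_Ioc)
    filter_upwards [hmem] with p hp
    have h1 : 0 ≤ 1 - Real.cos (p.1 * (s * p.2 j)) := sub_nonneg.2 (Real.cos_le_one _)
    rw [Function.uncurry, Real.norm_of_nonneg h1, one_div, inv_pow, div_inv_eq_mul]
    rcases le_total 1 (‖p.2‖ ^ 2 * s ^ 2) with h2 | h2
    · rw [min_eq_left h2]; linarith [Real.neg_one_le_cos (p.1 * (s * p.2 j))]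
    · rw [min_eq_right h2]
      have h3 := Real.one_sub_sq_div_two_le_cos (x := p.1 * (s * p.2 j))
      have h4 : (p.1 * (s * p.2 j)) ^ 2 ≤ 1 * (s ^ 2 * ‖p.2‖ ^ 2) := by
        rw [mul_pow, mul_pow]
        refine mul_le_mul (pow_le_one₀ hp.1.le hp.2) ?_ (by positivity) zero_le_one
        exact mul_le_mul_of_nonneg_left (sq_coord_le p.2 j) (by positivity)
      nlinarith [show 0 ≤ s ^ 2 * ‖p.2‖ ^ 2 by positivity]
  have hle : ∫ x in Ioc (0 : ℝ) 1, ∫ z, (1 - Real.cos (x * (s * z j))) ∂ν ≤ psiStar d A ν s := by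
    have h1 : ∫ x in Ioc (0 : ℝ) 1, ∫ z, (1 - Real.cos (x * (s * z j))) ∂ν ≤
        ∫ _ in Ioc (0 : ℝ) 1, psiStar d A ν s := by
      refine setIntegral_mono_on hint2.integral_prod_left (by simp) measurableSet_Ioc ?_
      intro x hx
      have h2 := h.le_psiStar hs (x := (x * s) • e) (by
        rw [norm_smul, he, PiLp.norm_single, norm_one, mul_one,
          Real.norm_of_nonneg (by have := hx.1; positivity)]
        nlinarith [hx.2])
      have h3 := h.nonneg ((x * s) • e)
      unfold rePsi at h2
      simp_rw [← hin]
      linarith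
    simpa using h1
  rw [integral_integral_swap hint2] at hle
  have h5 : ∫ z : Ed d, min 1 ((s * z j) ^ 2) / 40 ∂ν ≤ psiStar d A ν s := by
    refine (integral_mono (hint1.div_const 40) hint2.integral_prod_right fun z => ?_).trans hle
    have := integral_one_sub_cos_ge (s * z j)
    rwa [intervalIntegral.integral_of_le zero_le_one] at this
  rw [integral_div] at h5
  linarith

/-- The lower comparison `h(1/s) ≤ C_d ψ*(s)`; the upper one is `IsLevyPair.psiStar_le`. -/
theorem IsLevyPair.concFn_le (h : IsLevyPair d A ν) {s : ℝ} (hs : 0 < s) :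
    concFn d A ν (1 / s) ≤ (40 * d + 1) * psiStar d A ν s := by
  have hs' : 0 < 1 / s := by positivity
  have hint1 := h.integrable_coord hs
  have h1 : ∫ z : Ed d, min 1 (‖z‖ ^ 2 / (1 / s) ^ 2) ∂ν ≤ d * (40 * psiStar d A ν s) := by
    calc ∫ z : Ed d, min 1 (‖z‖ ^ 2 / (1 / s) ^ 2) ∂ν
        ≤ ∫ z : Ed d, ∑ j, min 1 ((s * z j) ^ 2) ∂ν := by
          refine integral_mono (h.integrable_min hs') (integrable_finsetSum _ fun j _ => hint1 j) ?_
          intro z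
          refine le_trans (le_of_eq ?_) (min_sum_le _ _ fun j _ => sq_nonneg _)
          simp_rw [mul_pow]
          rw [← Finset.mul_sum, EuclideanSpace.norm_sq_eq, one_div, inv_pow, div_inv_eq_mul,
            mul_comm]
          simp [sq_abs]
      _ = ∑ j, ∫ z : Ed d, min 1 ((s * z j) ^ 2) ∂ν := integral_finsetSum _ fun j _ => hint1 j
      _ ≤ ∑ _j : Fin d, 40 * psiStar d A ν s := Finset.sum_le_sum fun j _ => h.integral_coord_le hs j
      _ = d * (40 * psiStar d A ν s) := by simp
  have h2 : ‖A‖ / (1 / s) ^ 2 = ‖A‖ * s ^ 2 := by field_simp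
  have h3 := h.opNorm_le hs
  unfold concFn
  linarith

end Comparison

/-! ### Fourier inversion tested against a Gaussian -/

section GaussianTest

variable {d : ℕ}

theorem integrable_gauss {b : ℝ} (hb : 0 < b) :
    Integrable (fun v : Ed d => Real.exp (-b * ‖v‖ ^ 2)) := by
  have h := (GaussianFourier.integrable_cexp_neg_mul_sq_norm_add (b := (b : ℂ)) (by simpa using hb)
    0 (0 : Ed d)).norm
  refine h.congr (Eventually.of_forall fun v => ?_)
  simp only [zero_mul, add_zero]
  rw [Complex.norm_exp]
  norm_cast

theorem integral_gauss (a : ℝ) (ha : 0 < a) :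
    ∫ v : Ed d, Real.exp (-(Real.pi / a ^ 2) * ‖v‖ ^ 2) = a ^ d := by
  rw [GaussianFourier.integral_rexp_neg_mul_sq_norm (by positivity)]
  have : Real.pi / (Real.pi / a ^ 2) = a ^ 2 := by field_simp
  rw [this, finrank_euclideanSpace_fin, ← Real.rpow_natCast, ← Real.rpow_natCast,
    ← Real.rpow_mul ha.le]
  congr 1
  push_cast
  ring

/-- The weight which bounds the Gaussian average of the recentred exponent. -/
def gaussWeight (v : Ed d) : ℝ := (2 + 3 * ‖v‖ ^ 2) * Real.exp (-(1 / (4 * Real.pi)) * ‖v‖ ^ 2)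

theorem integrable_gaussWeight : Integrable (gaussWeight (d := d)) := by
  set b : ℝ := 1 / (4 * Real.pi) with hb
  have hb0 : 0 < b := by positivity
  refine ((integrable_gauss (d := d) (half_pos hb0)).const_mul (2 + 6 / b)).mono'
    (Continuous.aestronglyMeasurable (by unfold gaussWeight; fun_prop)) (Eventually.of_forall ?_)
  intro v
  rw [Real.norm_of_nonneg (by unfold gaussWeight; positivity), gaussWeight]
  have h1 : Real.exp (-b * ‖v‖ ^ 2) =
      Real.exp (-(b / 2) * ‖v‖ ^ 2) * Real.exp (-(b / 2 * ‖v‖ ^ 2)) := by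
    rw [← Real.exp_add]; ring_nf
  rw [h1]
  set y := b / 2 * ‖v‖ ^ 2 with hy
  have hy0 : 0 ≤ y := by positivity
  have h2 : ‖v‖ ^ 2 = 2 / b * y := by rw [hy]; field_simp
  have h3 : Real.exp (-y) ≤ 1 := by simpa using hy0
  have h4 : y * Real.exp (-y) ≤ 1 := by
    have h5 := Real.add_one_le_exp y
    rw [Real.exp_neg, ← div_eq_mul_inv, div_le_one (Real.exp_pos y)]
    linarith
  have h6 : (2 + 3 * ‖v‖ ^ 2) * Real.exp (-y) ≤ 2 + 6 / b := by
    have h7 : (2 + 3 * ‖v‖ ^ 2) * Real.exp (-y) =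
        2 * Real.exp (-y) + 6 / b * (y * Real.exp (-y)) := by rw [h2]; ring
    have h8 : 6 / b * (y * Real.exp (-y)) ≤ 6 / b * 1 := by gcongr
    linarith
  calc _ = ((2 + 3 * ‖v‖ ^ 2) * Real.exp (-y)) * Real.exp (-(b / 2) * ‖v‖ ^ 2) := by ring
    _ ≤ _ := by gcongr

/-- The total mass of `gaussWeight`, normalised as in the Fourier inversion formula. -/
def gaussMass (d : ℕ) : ℝ := ((2 * Real.pi) ^ d)⁻¹ * ∫ v : Ed d, gaussWeight v

theorem gaussMass_nonneg : 0 ≤ gaussMass d :=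
  mul_nonneg (by positivity) (integral_nonneg fun v => by unfold gaussWeight; positivity)

/-- The real part of the inverse Fourier transform of `E`, in the normalisation of `pdens`. -/
def invF (E : Ed d → ℂ) (u : Ed d) : ℝ :=
  ((2 * Real.pi) ^ d)⁻¹ * (∫ z : Ed d, Complex.exp (-(Complex.I * ((⟪u, z⟫ : ℝ) : ℂ))) * E z).re

theorem norm_exp_neg_I (a : ℝ) : ‖Complex.exp (-(Complex.I * (a : ℂ)))‖ = 1 := by
  simp [Complex.norm_exp]

theorem integrable_char {E : Ed d → ℂ} (hE : Integrable E) (u : Ed d) :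
    Integrable (fun z : Ed d => Complex.exp (-(Complex.I * ((⟪u, z⟫ : ℝ) : ℂ))) * E z) :=
  hE.bdd_mul (c := 1) (Continuous.aestronglyMeasurable (by fun_prop))
    (Eventually.of_forall fun z => (norm_exp_neg_I _).le)

theorem two_pi_pow_inv_le : ((2 * Real.pi) ^ d)⁻¹ ≤ 1 :=
  inv_le_one_of_one_le₀ (one_le_pow₀ (by linarith [Real.pi_gt_three]))

theorem invF_le {E : Ed d → ℂ} (u : Ed d) : invF E u ≤ ∫ z, ‖E z‖ := by
  have h1 : (∫ z : Ed d, Complex.exp (-(Complex.I * ((⟪u, z⟫ : ℝ) : ℂ))) * E z).re ≤ ∫ z, ‖E z‖ := by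
    refine (Complex.re_le_norm _).trans ((norm_integral_le_integral_norm _).trans (le_of_eq ?_))
    congr 1; ext z
    rw [norm_mul, norm_exp_neg_I, one_mul]
  have h0 : 0 ≤ ∫ z, ‖E z‖ := integral_nonneg fun z => norm_nonneg _
  calc invF E u ≤ ((2 * Real.pi) ^ d)⁻¹ * ∫ z, ‖E z‖ := by unfold invF; gcongr
    _ ≤ 1 * ∫ z, ‖E z‖ := by gcongr; exact two_pi_pow_inv_le
    _ = _ := one_mul _

theorem invF_lipschitz {E : Ed d → ℂ} (hE : Integrable E)
    (hE1 : Integrable fun z : Ed d => ‖z‖ * ‖E z‖) (u y : Ed d) :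
    invF E u - invF E (u + y) ≤ ‖y‖ * ∫ z, ‖z‖ * ‖E z‖ := by
  have h1 : (∫ z : Ed d, Complex.exp (-(Complex.I * ((⟪u, z⟫ : ℝ) : ℂ))) * E z).re -
      (∫ z : Ed d, Complex.exp (-(Complex.I * ((⟪u + y, z⟫ : ℝ) : ℂ))) * E z).re ≤
      ‖y‖ * ∫ z, ‖z‖ * ‖E z‖ := by
    rw [← Complex.sub_re, ← integral_sub (integrable_char hE u) (integrable_char hE (u + y)),
      ← integral_const_mul]
    refine (Complex.re_le_norm _).trans (norm_integral_le_of_norm_le (hE1.const_mul _)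
      (Eventually.of_forall fun z => ?_))
    have h2 : Complex.exp (-(Complex.I * ((⟪u, z⟫ : ℝ) : ℂ))) * E z -
        Complex.exp (-(Complex.I * ((⟪u + y, z⟫ : ℝ) : ℂ))) * E z =
        -(Complex.exp (-(Complex.I * ((⟪u, z⟫ : ℝ) : ℂ))) *
          (Complex.exp (Complex.I * ((-⟪y, z⟫ : ℝ) : ℂ)) - 1) * E z) := by
      have h3 : Complex.exp (-(Complex.I * ((⟪u + y, z⟫ : ℝ) : ℂ))) =
          Complex.exp (-(Complex.I * ((⟪u, z⟫ : ℝ) : ℂ))) *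
            Complex.exp (Complex.I * ((-⟪y, z⟫ : ℝ) : ℂ)) := by
        rw [← Complex.exp_add, inner_add_left]; push_cast; ring_nf
      rw [h3]; ring
    rw [h2, norm_neg, norm_mul, norm_mul, norm_exp_neg_I, one_mul, ← mul_assoc]
    gcongr
    refine Real.norm_exp_I_mul_ofReal_sub_one_le.trans ?_
    rw [norm_neg]
    exact norm_inner_le_norm y z
  have h0 : 0 ≤ ‖y‖ * ∫ z, ‖z‖ * ‖E z‖ :=
    mul_nonneg (norm_nonneg _) (integral_nonneg fun z => by positivity)
  calc invF E u - invF E (u + y) ≤ ((2 * Real.pi) ^ d)⁻¹ * (‖y‖ * ∫ z, ‖z‖ * ‖E z‖) := by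
        unfold invF; rw [← mul_sub]; gcongr
    _ ≤ 1 * (‖y‖ * ∫ z, ‖z‖ * ‖E z‖) := mul_le_mul_of_nonneg_right two_pi_pow_inv_le h0
    _ = _ := one_mul _

theorem integral_char_gauss {R : ℝ} (hR : 0 < R) (z : Ed d) :
    ∫ u : Ed d, Complex.exp (-(Complex.I * ((⟪u, z⟫ : ℝ) : ℂ))) *
      (Real.exp (-(Real.pi / R ^ 2) * ‖u‖ ^ 2) : ℂ) =
      ((R ^ d * Real.exp (-(1 / (4 * Real.pi)) * ‖R • z‖ ^ 2) : ℝ) : ℂ) := by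
  have hb : 0 < ((Real.pi / R ^ 2 : ℝ) : ℂ).re := by rw [Complex.ofReal_re]; positivity
  have h := GaussianFourier.integral_cexp_neg_mul_sq_norm_add hb (-Complex.I) z
  have h1 : ∀ u : Ed d, Complex.exp (-(Complex.I * ((⟪u, z⟫ : ℝ) : ℂ))) *
      (Real.exp (-(Real.pi / R ^ 2) * ‖u‖ ^ 2) : ℂ) =
      Complex.exp (-((Real.pi / R ^ 2 : ℝ) : ℂ) * (‖u‖ : ℂ) ^ 2 + -Complex.I * ((⟪z, u⟫ : ℝ) : ℂ)) := by
    intro u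
    rw [Complex.ofReal_exp, ← Complex.exp_add, real_inner_comm]
    push_cast; ring_nf
  simp_rw [h1]
  rw [h, Complex.ofReal_mul, Complex.ofReal_exp]
  congr 1
  · have h2 : (Real.pi : ℂ) / ((Real.pi / R ^ 2 : ℝ) : ℂ) = ((R ^ 2 : ℝ) : ℂ) := by
      rw [← Complex.ofReal_div]; congr 1; field_simp
    rw [h2, finrank_euclideanSpace_fin]
    have h3 : ((d : ℂ) / 2) = ((d / 2 : ℝ) : ℂ) := by push_cast; ring
    rw [h3, ← Complex.ofReal_cpow (by positivity)]
    congr 1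
    rw [← Real.rpow_natCast, ← Real.rpow_natCast, ← Real.rpow_mul hR.le]
    congr 1
    push_cast; ring
  · congr 1
    rw [norm_smul, Real.norm_of_nonneg hR.le]
    have : (Real.pi : ℂ) ≠ 0 := by exact_mod_cast Real.pi_ne_zero
    have : (R : ℂ) ≠ 0 := by exact_mod_cast hR.ne'
    push_cast
    rw [neg_sq, Complex.I_sq]
    field_simp

/-- Parseval's identity against the Gaussian of width `R`. -/
theorem integral_invF_gauss {E : Ed d → ℂ} (hE : Integrable E) {R : ℝ} (hR : 0 < R) :
    ∫ u : Ed d, invF E u * Real.exp (-(Real.pi / R ^ 2) * ‖u‖ ^ 2) =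
      ((2 * Real.pi) ^ d)⁻¹ * R ^ d *
        ∫ z : Ed d, (E z).re * Real.exp (-(1 / (4 * Real.pi)) * ‖R • z‖ ^ 2) := by
  set g : Ed d → ℝ := fun u => Real.exp (-(Real.pi / R ^ 2) * ‖u‖ ^ 2) with hg
  have hgi : Integrable g := integrable_gauss (by positivity)
  have hprod : Integrable (Function.uncurry fun (u z : Ed d) =>
      Complex.exp (-(Complex.I * ((⟪u, z⟫ : ℝ) : ℂ))) * ((g u : ℂ) * E z))
      (volume.prod volume) :=
    (hgi.ofReal (𝕜 := ℂ) |>.mul_prod hE).bdd_mul (c := 1)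
      (Continuous.aestronglyMeasurable (by fun_prop))
      (Eventually.of_forall fun p => (norm_exp_neg_I _).le)
  have h1 : ∀ u : Ed d, invF E u * g u = ((2 * Real.pi) ^ d)⁻¹ *
      (∫ z, Complex.exp (-(Complex.I * ((⟪u, z⟫ : ℝ) : ℂ))) * ((g u : ℂ) * E z)).re := by
    intro u
    have h2 : ∫ z, Complex.exp (-(Complex.I * ((⟪u, z⟫ : ℝ) : ℂ))) * ((g u : ℂ) * E z) =
        (g u : ℂ) * ∫ z, Complex.exp (-(Complex.I * ((⟪u, z⟫ : ℝ) : ℂ))) * E z := by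
      rw [← integral_const_mul]; congr 1; ext z; ring
    rw [h2, Complex.re_ofReal_mul, invF]; ring
  have h3 : ∀ z : Ed d, ∫ u : Ed d, Complex.exp (-(Complex.I * ((⟪u, z⟫ : ℝ) : ℂ))) *
      ((g u : ℂ) * E z) =
      ((R ^ d * Real.exp (-(1 / (4 * Real.pi)) * ‖R • z‖ ^ 2) : ℝ) : ℂ) * E z := by
    intro z
    rw [← integral_char_gauss hR z, ← integral_mul_const]
    congr 1; ext u; ring
  have h4 : ∫ u : Ed d, (∫ z, Complex.exp (-(Complex.I * ((⟪u, z⟫ : ℝ) : ℂ))) *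
      ((g u : ℂ) * E z)).re =
      (∫ u : Ed d, ∫ z, Complex.exp (-(Complex.I * ((⟪u, z⟫ : ℝ) : ℂ))) * ((g u : ℂ) * E z)).re :=
    integral_re (𝕜 := ℂ) hprod.integral_prod_left
  have h5 : Integrable fun z => ((R ^ d * Real.exp (-(1 / (4 * Real.pi)) * ‖R • z‖ ^ 2) : ℝ) : ℂ)
      * E z := by
    have := hprod.integral_prod_right
    simpa only [Function.uncurry, h3] using this
  have h6 : ∫ z, (((R ^ d * Real.exp (-(1 / (4 * Real.pi)) * ‖R • z‖ ^ 2) : ℝ) : ℂ) * E z).re =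
      (∫ z, ((R ^ d * Real.exp (-(1 / (4 * Real.pi)) * ‖R • z‖ ^ 2) : ℝ) : ℂ) * E z).re :=
    integral_re (𝕜 := ℂ) h5
  change ∫ u : Ed d, invF E u * g u = _
  simp_rw [h1]
  rw [integral_const_mul, h4, integral_integral_swap hprod]
  simp_rw [h3]
  rw [← h6, mul_assoc]
  congr 1
  rw [← integral_const_mul]
  congr 1; ext z
  rw [Complex.re_ofReal_mul]; ring

/-- A Fourier transform close to `1` on the scale `1/R` forces its inverse transform to carry mass
at least `1/2` on the scale `R`. -/
theorem integral_invF_gauss_ge {E : Ed d → ℂ} (hE : Integrable E) {R η : ℝ} (hR : 0 < R)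
    (hη : η * gaussMass d ≤ 1 / 2)
    (hre : ∀ z, 1 - η * (2 + 3 * (R ^ 2 * ‖z‖ ^ 2)) ≤ (E z).re) :
    1 / 2 ≤ ∫ u : Ed d, invF E u * Real.exp (-(Real.pi / R ^ 2) * ‖u‖ ^ 2) := by
  rw [integral_invF_gauss hE hR]
  set G : Ed d → ℝ := fun v => Real.exp (-(1 / (4 * Real.pi)) * ‖v‖ ^ 2) with hG
  have hGi : Integrable G := integrable_gauss (by positivity)
  have hnorm : ∀ z : Ed d, ‖R • z‖ ^ 2 = R ^ 2 * ‖z‖ ^ 2 := by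
    intro z; rw [norm_smul, mul_pow, Real.norm_of_nonneg hR.le]
  have hL : Integrable fun z : Ed d => G (R • z) - η * gaussWeight (R • z) :=
    ((hGi.sub (integrable_gaussWeight.const_mul η)).comp_smul hR.ne')
  have hRint : Integrable fun z : Ed d => (E z).re * G (R • z) := by
    refine hE.re.mul_bdd (c := 1) ?_ (Eventually.of_forall fun z => ?_)
    · exact Continuous.aestronglyMeasurable (by fun_prop)
    · rw [Real.norm_of_nonneg (by positivity), hG, Real.exp_le_one_iff]
      have : 0 ≤ 1 / (4 * Real.pi) * ‖R • z‖ ^ 2 := by positivity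
      linarith
  have h1 : ∫ z : Ed d, (G (R • z) - η * gaussWeight (R • z)) ≤ ∫ z : Ed d, (E z).re * G (R • z) := by
    refine integral_mono hL hRint fun z => ?_
    have h2 : G (R • z) - η * gaussWeight (R • z) =
        (1 - η * (2 + 3 * (R ^ 2 * ‖z‖ ^ 2))) * G (R • z) := by
      rw [gaussWeight, hnorm]; simp only [hG, hnorm]; ring
    dsimp only
    rw [h2]
    exact mul_le_mul_of_nonneg_right (hre z) (Real.exp_pos _).le
  have h2 : ∫ z : Ed d, (G (R • z) - η * gaussWeight (R • z)) =
      (R ^ d)⁻¹ * ((2 * Real.pi) ^ d - η * ∫ v : Ed d, gaussWeight v) := by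
    rw [Measure.integral_comp_smul volume (fun v : Ed d => G v - η * gaussWeight v) R,
      integral_sub hGi (integrable_gaussWeight.const_mul η), integral_const_mul,
      finrank_euclideanSpace_fin, abs_of_nonneg (by positivity), smul_eq_mul]
    have h3 := integral_gauss (d := d) (2 * Real.pi) (by positivity)
    have h4 : Real.pi / (2 * Real.pi) ^ 2 = 1 / (4 * Real.pi) := by field_simp; norm_num
    rw [h4] at h3
    rw [hG, h3]
  rw [h2] at h1
  have hP : (0 : ℝ) < (2 * Real.pi) ^ d := by positivity
  calc (1 : ℝ) / 2 ≤ 1 - η * gaussMass d := by linarith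
    _ = ((2 * Real.pi) ^ d)⁻¹ * R ^ d *
        ((R ^ d)⁻¹ * ((2 * Real.pi) ^ d - η * ∫ v : Ed d, gaussWeight v)) := by
      unfold gaussMass; field_simp
    _ ≤ _ := by gcongr

theorem mul_le_of_bounds {y J P C r Q : ℝ} (hJ : 0 ≤ J) (hP : 0 < P) (hC : 0 ≤ C)
    (hQ : 0 ≤ Q) (hrJ : r * J ≤ C * Q) (hy : y * (8 * P * (C + 1)) ≤ r) :
    y * J ≤ (8 * P)⁻¹ * Q := by
  have h1 : y * (8 * P * (C + 1)) * J ≤ C * Q := (mul_le_mul_of_nonneg_right hy hJ).trans hrJ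
  have h2 : (8 * P * (C + 1)) * (y * J) ≤ (8 * P * (C + 1)) * ((8 * P)⁻¹ * Q) := by
    have h3 : (8 * P * (C + 1)) * ((8 * P)⁻¹ * Q) = (C + 1) * Q := by field_simp
    rw [h3]; linarith
  exact le_of_mul_le_mul_left h2 (by positivity)

/-- The quantitative heart of the proof. A function whose Gaussian average at scale `R = M r` is at
least `1/2`, which is bounded by `C r^{-d}` and has Lipschitz constant at most `C r^{-d-1}`, is
bounded below on a ball of radius comparable to `r` whose centre lies at distance `O(r)` from `0`.
No positivity is needed: the upper bound prevents the mass from being seen only far away. -/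
theorem exists_ball_invF_ge {E : Ed d → ℂ} (hE : Integrable E)
    (hE1 : Integrable fun z : Ed d => ‖z‖ * ‖E z‖) {r M C η : ℝ} (hr : 0 < r) (hM : 1 ≤ M)
    (hC : ∫ z : Ed d, (1 + r * ‖z‖) * ‖E z‖ ≤ C * (r ^ d)⁻¹)
    (hη : η * gaussMass d ≤ 1 / 2)
    (hre : ∀ z, 1 - η * (2 + 3 * ((M * r) ^ 2 * ‖z‖ ^ 2)) ≤ (E z).re) :
    ∃ u : Ed d, ‖u‖ ≤ M * (1 + 4 * C * (2 * M) ^ d) * r ∧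
      ∀ y : Ed d, ‖y‖ * (8 * (2 * M) ^ d * (C + 1)) ≤ r →
        (8 * (2 * M) ^ d)⁻¹ * (r ^ d)⁻¹ ≤ invF E (u + y) := by
  set R := M * r with hRdef
  have hM0 : 0 < M := by linarith
  have hR : 0 < R := by positivity
  set δ : ℝ := ((2 * R) ^ d)⁻¹ / 4 with hδ
  have hδ0 : 0 < δ := by positivity
  have hδ' : δ = (4 * (2 * M) ^ d)⁻¹ * (r ^ d)⁻¹ := by
    rw [hδ, hRdef, ← mul_assoc, mul_pow _ r]; field_simp
  have hsplit : ∫ z : Ed d, (1 + r * ‖z‖) * ‖E z‖ = (∫ z, ‖E z‖) + r * ∫ z, ‖z‖ * ‖E z‖ := by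
    rw [← integral_const_mul, ← integral_add hE.norm (hE1.const_mul r)]
    congr 1; ext z; ring
  have hI0 : 0 ≤ ∫ z, ‖E z‖ := integral_nonneg fun z => norm_nonneg _
  have hI1 : 0 ≤ ∫ z, ‖z‖ * ‖E z‖ := integral_nonneg fun z => by positivity
  have hA : ∫ z, ‖E z‖ ≤ C * (r ^ d)⁻¹ := by nlinarith
  have hB : r * ∫ z, ‖z‖ * ‖E z‖ ≤ C * (r ^ d)⁻¹ := by linarith
  have hrd : 0 < (r ^ d)⁻¹ := by positivity
  have hC0 : 0 ≤ C := by
    by_contra! h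
    nlinarith
  -- Otherwise the average against the Gaussian of width `R` is at most `δ` times the mass of the
  -- Gaussian of width `2 R`, that is `1/4`. The exponential weight in the claim, compared with the
  -- upper bound `C r^{-d}`, then confines `u`.
  obtain ⟨u, hu⟩ : ∃ u : Ed d, δ * Real.exp (3 / 4 * (Real.pi / R ^ 2) * ‖u‖ ^ 2) ≤ invF E u := by
    by_contra! hcon
    have h1 := integral_invF_gauss_ge hE hR hη hre
    -- a non-integrable product would have the junk integral `0`, below `1/2`
    have h2 : Integrable fun u : Ed d => invF E u * Real.exp (-(Real.pi / R ^ 2) * ‖u‖ ^ 2) := by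
      by_contra hni
      rw [integral_undef hni] at h1
      norm_num at h1
    have hb : 0 < Real.pi / (2 * R) ^ 2 := by positivity
    have h3 : ∫ u : Ed d, invF E u * Real.exp (-(Real.pi / R ^ 2) * ‖u‖ ^ 2) ≤
        ∫ u : Ed d, δ * Real.exp (-(Real.pi / (2 * R) ^ 2) * ‖u‖ ^ 2) := by
      refine integral_mono h2 ((integrable_gauss hb).const_mul δ) fun u => ?_
      have h4 : Real.exp (-(Real.pi / (2 * R) ^ 2) * ‖u‖ ^ 2) =
          Real.exp (3 / 4 * (Real.pi / R ^ 2) * ‖u‖ ^ 2) *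
            Real.exp (-(Real.pi / R ^ 2) * ‖u‖ ^ 2) := by
        rw [← Real.exp_add]; congr 1; field_simp; ring
      dsimp only
      rw [h4, ← mul_assoc]
      exact mul_le_mul_of_nonneg_right (hcon u).le (Real.exp_pos _).le
    rw [integral_const_mul, integral_gauss (2 * R) (by positivity)] at h3
    have h5 : δ * (2 * R) ^ d = 1 / 4 := by rw [hδ]; field_simp
    linarith
  have hx : 1 + ‖u‖ ^ 2 / R ^ 2 ≤ Real.exp (3 / 4 * (Real.pi / R ^ 2) * ‖u‖ ^ 2) := by
    have h1 := Real.add_one_le_exp (3 / 4 * (Real.pi / R ^ 2) * ‖u‖ ^ 2)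
    have h2 : 3 / 4 * (Real.pi / R ^ 2) * ‖u‖ ^ 2 = (3 / 4 * Real.pi) * (‖u‖ ^ 2 / R ^ 2) := by ring
    have h3 : 0 ≤ ‖u‖ ^ 2 / R ^ 2 := by positivity
    nlinarith [Real.pi_gt_three]
  have hlow : δ * (1 + ‖u‖ ^ 2 / R ^ 2) ≤ invF E u :=
    (mul_le_mul_of_nonneg_left hx hδ0.le).trans hu
  refine ⟨u, ?_, fun y hy => ?_⟩
  · set X := 4 * C * (2 * M) ^ d with hX
    have hX0 : 0 ≤ X := by positivity
    have h1 : δ * (1 + ‖u‖ ^ 2 / R ^ 2) ≤ δ * X := by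
      refine hlow.trans ((invF_le u).trans (hA.trans (le_of_eq ?_)))
      rw [hδ', hX]; field_simp
    have h2 : 1 + ‖u‖ ^ 2 / R ^ 2 ≤ X := le_of_mul_le_mul_left h1 hδ0
    have h3 : ‖u‖ ^ 2 ≤ X * R ^ 2 := by
      rw [← div_le_iff₀ (by positivity)]; linarith
    have h4 : ‖u‖ ≤ (1 + X) * R := by
      refine abs_le_of_sq_le_sq' ?_ (by positivity) |>.2
      rw [mul_pow]
      refine h3.trans ?_
      gcongr
      nlinarith
    calc ‖u‖ ≤ (1 + X) * R := h4
      _ = _ := by rw [hRdef]; ring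
  · have h1 := invF_lipschitz hE hE1 u y
    have h2 : δ ≤ invF E u := by
      have : 0 ≤ ‖u‖ ^ 2 / R ^ 2 := by positivity
      nlinarith
    have hP0 : 0 < (2 * M) ^ d := by positivity
    have h3 := mul_le_of_bounds hI1 hP0 hC0 hrd.le hB hy
    have h5 : δ = 2 * ((8 * (2 * M) ^ d)⁻¹ * (r ^ d)⁻¹) := by rw [hδ']; field_simp; norm_num
    linarith

end GaussianTest

/-! ### Lower bounds for the density -/

section LowerBound

variable {d : ℕ} {A : Ed d →L[ℝ] Ed d} {ν : Measure (Ed d)}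

/-- The near-diagonal lower bound at time `t` on the spatial scale `r`, with constant `c`. -/
def DensityLower (A : Ed d →L[ℝ] Ed d) (ν : Measure (Ed d)) (b : Ed d) (t r c : ℝ) : Prop :=
  ∃ xt : Ed d, ‖xt‖ ≤ c * r ∧ ∀ y : Ed d, ‖y‖ ≤ (1 / c) * r →
    (1 / c) * r ^ (-(d : ℤ)) ≤ pdens d A ν b t (y + xt + t • bshift d ν b r)

theorem DensityLower.mono {b : Ed d} {t r c c' : ℝ} (h : DensityLower A ν b t r c) (hc : 0 < c)
    (hcc : c ≤ c') (hr : 0 < r) : DensityLower A ν b t r c' := by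
  obtain ⟨xt, h1, h2⟩ := h
  refine ⟨xt, h1.trans (by gcongr), fun y hy => ?_⟩
  refine le_trans ?_ (h2 y (hy.trans (by gcongr)))
  have : 0 ≤ r ^ (-(d : ℤ)) := by positivity
  gcongr

/-- For `‖w‖ ≥ 1` the bound is weaker than `Re e^w ≥ -1`. -/
theorem one_sub_le_re_exp {w : ℂ} (hw : w.re ≤ 0) : 1 - 2 * ‖w‖ ≤ (Complex.exp w).re := by
  rcases le_total ‖w‖ 1 with h | h
  · have h1 := Complex.norm_exp_sub_one_le h
    have h2 := (abs_le.1 ((Complex.abs_re_le_norm (Complex.exp w - 1)).trans h1)).1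
    rw [Complex.sub_re, Complex.one_re] at h2
    linarith
  · have h1 : ‖Complex.exp w‖ ≤ 1 := by rw [Complex.norm_exp]; simpa using hw
    have h2 := (abs_le.1 ((Complex.abs_re_le_norm (Complex.exp w)).trans h1)).1
    linarith

/-- The lower bound at a single time, from integrability of `e^{-t Re ψ}` on the scale `1/r` and
smallness of `t h(M r)`. The centre `x_t` absorbs the difference of the drifts `b_{Mr}` and `b_r`. -/
theorem IsLevyPair.densityLower (h : IsLevyPair d A ν) (b : Ed d) {t r M C c : ℝ} (ht : 0 < t)
    (hr : 0 < r) (hM : 1 ≤ M) (hC : 0 ≤ C) (hth : t * concFn d A ν r = 1)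
    (htM : 2 * (t * concFn d A ν (M * r)) * gaussMass d ≤ 1 / 2)
    (hint : Integrable fun z : Ed d => (1 + r * ‖z‖) * Real.exp (-(t * rePsi d A ν z)))
    (hCint : ∫ z : Ed d, (1 + r * ‖z‖) * Real.exp (-(t * rePsi d A ν z)) ≤ C * (r ^ d)⁻¹)
    (hc : 16 * M * (2 * M) ^ d * (C + 1) ≤ c) : DensityLower A ν b t r c := by
  have hM0 : 0 < M := by linarith
  set R := M * r with hRdef
  have hR : 0 < R := by positivity
  have hrR : r ≤ R := by rw [hRdef]; nlinarith
  set E : Ed d → ℂ := fun z => Complex.exp (-((t : ℂ) * psiCent A ν R z)) with hE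
  have hre : ∀ z, (-((t : ℂ) * psiCent A ν R z)).re = -(t * rePsi d A ν z) := by
    intro z
    rw [Complex.neg_re, Complex.re_ofReal_mul, h.re_psiCent hR]
  have hEn : ∀ z, ‖E z‖ = Real.exp (-(t * rePsi d A ν z)) := by
    intro z
    rw [hE, Complex.norm_exp, hre]
  have hEm : Measurable E := by
    have := h.measurable_psiCent R
    fun_prop
  have hEi : Integrable E := by
    refine hint.mono' hEm.aestronglyMeasurable (Eventually.of_forall fun z => ?_)
    rw [hEn]
    refine le_mul_of_one_le_left (Real.exp_pos _).le ?_
    have : 0 ≤ r * ‖z‖ := by positivity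
    linarith
  have hE1 : Integrable fun z : Ed d => ‖z‖ * ‖E z‖ := by
    refine (hint.const_mul r⁻¹).mono' (by fun_prop) (Eventually.of_forall fun z => ?_)
    rw [Real.norm_of_nonneg (by positivity), hEn, ← mul_assoc]
    gcongr
    rw [mul_add, inv_mul_cancel_left₀ hr.ne']
    have : 0 < r⁻¹ := by positivity
    linarith
  obtain ⟨u, hu, hball⟩ := exists_ball_invF_ge (C := C) (M := M)
    (η := 2 * (t * concFn d A ν R)) hEi hE1 hr hM (by simpa only [hEn] using hCint) htM (by
      intro z
      have h1 : (-((t : ℂ) * psiCent A ν R z)).re ≤ 0 := by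
        rw [hre]
        have := mul_nonneg ht.le (h.rePsi_nonneg z)
        linarith
      refine le_trans ?_ (one_sub_le_re_exp h1)
      rw [norm_neg, norm_mul, Complex.norm_real, Real.norm_of_nonneg ht.le]
      have h2 := mul_le_mul_of_nonneg_left (h.norm_psiCent_le hR z) ht.le
      linarith)
  set P := (2 * M) ^ d with hP
  have hP1 : 1 ≤ P := one_le_pow₀ (by linarith)
  have hMP : 1 ≤ M * P := one_le_mul_of_one_le_of_one_le hM hP1
  have hMP' : M ≤ M * P := le_mul_of_one_le_right hM0.le hP1
  have hMPC : 0 ≤ M * P * C := by positivity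
  have hc1 : M * (1 + 4 * C * P) + M ≤ c := by
    refine le_trans ?_ hc
    nlinarith
  have hc2 : 8 * P * (C + 1) ≤ c := by
    refine le_trans ?_ hc
    have : 8 * P ≤ 16 * M * P := by nlinarith
    gcongr
  have hc3 : 8 * P ≤ c := by
    refine le_trans ?_ hc2
    nlinarith
  have hc0 : 0 < c := by linarith
  refine ⟨u + t • (bshift d ν b R - bshift d ν b r), ?_, fun y hy => ?_⟩
  · have h1 : ‖t • (bshift d ν b R - bshift d ν b r)‖ ≤ M * r := by
      rw [norm_smul, Real.norm_of_nonneg ht.le]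
      calc t * ‖bshift d ν b R - bshift d ν b r‖ ≤ t * (R * concFn d A ν r) := by
            gcongr; exact h.norm_bshift_sub_le b hr hrR
        _ = R * (t * concFn d A ν r) := by ring
        _ = M * r := by rw [hth, mul_one]
    calc _ ≤ M * (1 + 4 * C * P) * r + M * r := (norm_add_le _ _).trans (add_le_add hu h1)
      _ = (M * (1 + 4 * C * P) + M) * r := by ring
      _ ≤ c * r := by gcongr
  · have h1 : pdens d A ν b t (y + (u + t • (bshift d ν b R - bshift d ν b r)) + t • bshift d ν b r)
        = invF E (u + y) := by
      unfold pdens invF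
      congr 3
      ext z
      rw [hE]
      dsimp only
      rw [← Complex.exp_add, h.psiFn_eq b hR]
      congr 1
      have h2 : y + (u + t • (bshift d ν b R - bshift d ν b r)) + t • bshift d ν b r =
          (u + y) + t • bshift d ν b R := by rw [smul_sub]; abel
      rw [h2, inner_add_left (u + y), inner_smul_left, real_inner_comm z (bshift d ν b R)]
      simp only [conj_trivial]
      push_cast
      ring
    rw [h1]
    have h3 : ‖y‖ * (8 * P * (C + 1)) ≤ r := by
      calc ‖y‖ * (8 * P * (C + 1)) ≤ (1 / c * r) * c := by gcongr
        _ = r := by field_simp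
    refine le_trans ?_ (hball y h3)
    rw [zpow_neg, zpow_natCast, one_div]
    gcongr

/-! ### Consequences of the scaling condition -/

/-- The stretched exponential majorant of `e^{-t Re ψ}` in the rescaled variable. -/
def stretchedExp (κ α : ℝ) (v : Ed d) : ℝ := (1 + ‖v‖) * Real.exp (-κ * ‖v‖ ^ α)

theorem integrable_stretchedExp (hd : 1 ≤ d) {κ α : ℝ} (hκ : 0 < κ) (hα : 0 < α) :
    Integrable (stretchedExp (d := d) κ α) := by
  have : Nonempty (Fin d) := ⟨⟨0, hd⟩⟩
  refine (integrable_fun_norm_addHaar (volume : Measure (Ed d))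
    (f := fun y : ℝ => (1 + y) * Real.exp (-κ * y ^ α))).2 ?_
  have h1 : ∀ n : ℕ, IntegrableOn (fun y : ℝ => y ^ n * Real.exp (-κ * y ^ α)) (Ioi 0) := by
    intro n
    have := integrableOn_rpow_mul_exp_neg_mul_rpow (s := n) (p := α) (b := κ)
      (by have : (0 : ℝ) ≤ n := n.cast_nonneg
          linarith) hα hκ
    simpa only [Real.rpow_natCast] using this
  refine ((h1 (d - 1)).add (h1 (d - 1 + 1))).congr (Eventually.of_forall fun y => ?_)
  simp only [Pi.add_apply, finrank_euclideanSpace_fin, smul_eq_mul]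
  ring

/-- The exponent `c₃² / (40 d + 1)` in the decay of the characteristic function. -/
def decayConst (d : ℕ) (c3 : ℝ) : ℝ := c3 ^ 2 / (40 * d + 1)

/-- The resulting bound for the integrals of the characteristic function. -/
def intConst (d : ℕ) (α3 c3 : ℝ) : ℝ :=
  Real.exp (decayConst d c3) * ∫ v : Ed d, stretchedExp (decayConst d c3) α3 v

theorem intConst_nonneg (α3 c3 : ℝ) : 0 ≤ intConst d α3 c3 :=
  mul_nonneg (Real.exp_pos _).le (integral_nonneg fun v => by unfold stretchedExp; positivity)

/-- Growth of `t Re ψ` in the rescaled variable `r z`: for `r ‖z‖ ≥ 1` it follows from the scaling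
condition and `h(r) ≤ (40 d + 1) ψ*(1/r)`, and otherwise the left-hand side is non-positive. -/
theorem IsLevyPair.rePsi_ge (h : IsLevyPair d A ν) {α3 c3 : ℝ} {T3 : ℝ≥0∞} (hc : 0 < c3)
    (hα : 0 < α3)
    (hC3 : CondC3 d A ν T3 c3 α3) {t r : ℝ} (ht : 0 < t) (hr : 0 < r)
    (hth : t * concFn d A ν r = 1) (hrT : 1 / T3 < ENNReal.ofReal (1 / r)) (z : Ed d) :
    decayConst d c3 * ((r * ‖z‖) ^ α3 - 1) ≤ t * rePsi d A ν z := by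
  have hκ : 0 < decayConst d c3 := by unfold decayConst; positivity
  rcases le_total 1 (r * ‖z‖) with h1 | h1
  · have hz : 1 / r ≤ ‖z‖ := by rw [div_le_iff₀ hr]; linarith
    have h2 := hC3.1 z (hrT.trans_le (ENNReal.ofReal_le_ofReal hz))
    have h3 := hC3.2 (r * ‖z‖) (1 / r) h1 (by positivity) hrT
    have h4 : r * ‖z‖ * (1 / r) = ‖z‖ := by field_simp
    rw [h4] at h3
    have h5 := h.concFn_le (s := 1 / r) (by positivity)
    rw [one_div_one_div] at h5
    set X := (r * ‖z‖) ^ α3 with hX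
    have hX0 : 0 ≤ X := by positivity
    have h6 : c3 * (c3 * X * psiStar d A ν (1 / r)) ≤ rePsi d A ν z :=
      (mul_le_mul_of_nonneg_left h3 hc.le).trans h2
    have h7 : decayConst d c3 * X * concFn d A ν r ≤ rePsi d A ν z := by
      refine le_trans ?_ h6
      calc decayConst d c3 * X * concFn d A ν r
          ≤ decayConst d c3 * X * ((40 * d + 1) * psiStar d A ν (1 / r)) := by gcongr
        _ = _ := by unfold decayConst; field_simp
    calc decayConst d c3 * (X - 1) ≤ decayConst d c3 * X * (t * concFn d A ν r) := by
          rw [hth]; nlinarith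
      _ = t * (decayConst d c3 * X * concFn d A ν r) := by ring
      _ ≤ _ := by gcongr
  · have h2 : (r * ‖z‖) ^ α3 ≤ 1 := Real.rpow_le_one (by positivity) h1 hα.le
    have h3 := mul_nonneg ht.le (h.rePsi_nonneg z)
    nlinarith

/-- Substituting `v = r z` in the growth bound gives the factor `r^{-d}`. The summand `r ‖z‖` of the
weight controls the gradient of the density. -/
theorem IsLevyPair.integral_exp_le (h : IsLevyPair d A ν) (hd : 1 ≤ d) {α3 c3 : ℝ} {T3 : ℝ≥0∞}
    (hc : 0 < c3) (hα : 0 < α3) (hC3 : CondC3 d A ν T3 c3 α3) {t r : ℝ} (ht : 0 < t) (hr : 0 < r)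
    (hth : t * concFn d A ν r = 1) (hrT : 1 / T3 < ENNReal.ofReal (1 / r)) :
    Integrable (fun z : Ed d => (1 + r * ‖z‖) * Real.exp (-(t * rePsi d A ν z))) ∧
      ∫ z : Ed d, (1 + r * ‖z‖) * Real.exp (-(t * rePsi d A ν z)) ≤
        intConst d α3 c3 * (r ^ d)⁻¹ := by
  have hκ : 0 < decayConst d c3 := by unfold decayConst; positivity
  set κ := decayConst d c3 with hκdef
  have hmeas : Measurable (rePsi d A ν) := by
    have h1 := Complex.measurable_re.comp (h.measurable_psiCent 1)
    have h2 : (fun x => (psiCent A ν 1 x).re) = rePsi d A ν := funext (h.re_psiCent one_pos)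
    rwa [← h2]
  have hG : Integrable fun z : Ed d => Real.exp κ * stretchedExp κ α3 (r • z) :=
    ((integrable_stretchedExp hd hκ hα).comp_smul hr.ne').const_mul _
  have hle : ∀ z : Ed d, (1 + r * ‖z‖) * Real.exp (-(t * rePsi d A ν z)) ≤
      Real.exp κ * stretchedExp κ α3 (r • z) := by
    intro z
    rw [stretchedExp, norm_smul, Real.norm_of_nonneg hr.le, mul_left_comm, ← Real.exp_add]
    gcongr
    have := h.rePsi_ge hc hα hC3 ht hr hth hrT z
    linarith
  have hi : Integrable (fun z : Ed d => (1 + r * ‖z‖) * Real.exp (-(t * rePsi d A ν z))) := by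
    refine hG.mono' (Measurable.aestronglyMeasurable (by fun_prop))
      (Eventually.of_forall fun z => ?_)
    rw [Real.norm_of_nonneg (by positivity)]
    exact hle z
  refine ⟨hi, (integral_mono hi hG hle).trans (le_of_eq ?_)⟩
  rw [integral_const_mul, Measure.integral_comp_smul, finrank_euclideanSpace_fin,
    abs_of_nonneg (by positivity), smul_eq_mul, intConst]
  ring

/-- The ratio `M` of scales: by scaling, `t h(M r)` is small when `t h(r) = 1`. -/
def ratioConst (d : ℕ) (α3 c3 : ℝ) : ℝ :=
  (1 + 20 * (40 * d + 1) * gaussMass d / c3) ^ (1 / α3)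

theorem one_le_ratioConst {α3 c3 : ℝ} (hc : 0 < c3) (hα : 0 < α3) : 1 ≤ ratioConst d α3 c3 := by
  have h0 : 0 ≤ 20 * (40 * (d : ℝ) + 1) * gaussMass d / c3 := by
    have := gaussMass_nonneg (d := d); positivity
  exact Real.one_le_rpow (by linarith) (by positivity)

theorem IsLevyPair.concFn_ratio_le (h : IsLevyPair d A ν) {α3 c3 : ℝ} {T3 : ℝ≥0∞}
    (hc : 0 < c3) (hα : 0 < α3) (hC3 : CondC3 d A ν T3 c3 α3) {t r : ℝ} (ht : 0 < t) (hr : 0 < r)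
    (hth : t * concFn d A ν r = 1)
    (hrT : 1 / T3 < ENNReal.ofReal (1 / (ratioConst d α3 c3 * r))) :
    2 * (t * concFn d A ν (ratioConst d α3 c3 * r)) * gaussMass d ≤ 1 / 2 := by
  have hM := one_le_ratioConst (d := d) hc hα
  have hg := gaussMass_nonneg (d := d)
  set M := ratioConst d α3 c3 with hMdef
  set B := 20 * (40 * (d : ℝ) + 1) * gaussMass d / c3 with hB
  have hB0 : 0 ≤ B := by positivity
  have hMα : M ^ α3 = 1 + B := by
    rw [hMdef, ratioConst, ← Real.rpow_mul (by linarith), one_div_mul_cancel hα.ne', Real.rpow_one]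
  have hM0 : 0 < M := by linarith
  have h1 := hC3.2 M (1 / (M * r)) hM (by positivity) hrT
  have h2 : M * (1 / (M * r)) = 1 / r := by field_simp
  rw [h2, hMα] at h1
  have h3 := h.psiStar_le (s := 1 / r) (by positivity)
  have h4 := h.concFn_le (s := 1 / (M * r)) (by positivity)
  rw [one_div_one_div] at h3 h4
  set S := psiStar d A ν (1 / (M * r)) with hS
  have h5 : c3 * (1 + B) * (t * S) ≤ 5 := by
    calc c3 * (1 + B) * (t * S) = t * (c3 * (1 + B) * S) := by ring
      _ ≤ t * (5 * concFn d A ν r) := mul_le_mul_of_nonneg_left (h1.trans h3) ht.le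
      _ = 5 * (t * concFn d A ν r) := by ring
      _ = 5 := by rw [hth]; norm_num
  have hS0 : 0 ≤ S := h.psiStar_nonneg (by positivity)
  have h6 : 4 * ((40 * d + 1) * gaussMass d * (t * S)) ≤ 1 := by
    have h7 : c3 * B = 20 * (40 * d + 1) * gaussMass d := by rw [hB]; field_simp
    have h8 : 0 ≤ c3 * (t * S) := by positivity
    nlinarith
  have h9 : t * concFn d A ν (M * r) ≤ (40 * d + 1) * (t * S) := by
    calc t * concFn d A ν (M * r) ≤ t * ((40 * d + 1) * S) := by gcongr
      _ = _ := by ring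
  calc 2 * (t * concFn d A ν (M * r)) * gaussMass d ≤
      2 * ((40 * d + 1) * (t * S)) * gaussMass d := by gcongr
    _ ≤ 1 / 2 := by linarith

/-- The constant of the lower bound, for a ratio of scales `M` and an integral bound `C r^{-d}`. -/
def lowerConst (d : ℕ) (M C : ℝ) : ℝ := 16 * M * (2 * M) ^ d * (C + 1)

theorem le_lowerConst {M C : ℝ} (hM : 1 ≤ M) (hC : 0 ≤ C) : M ≤ lowerConst d M C := by
  have hP1 : 1 ≤ (2 * M) ^ d := one_le_pow₀ (by linarith)
  have h1 : 1 ≤ (2 * M) ^ d * (C + 1) := one_le_mul_of_one_le_of_one_le hP1 (by linarith)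
  unfold lowerConst
  nlinarith

/-- The constant for short times, depending on `d`, `α₃` and `c₃` only. -/
def shortConst (d : ℕ) (α3 c3 : ℝ) : ℝ := lowerConst d (ratioConst d α3 c3) (intConst d α3 c3)

theorem ratioConst_le_shortConst {α3 c3 : ℝ} (hc : 0 < c3) (hα : 0 < α3) :
    ratioConst d α3 c3 ≤ shortConst d α3 c3 :=
  le_lowerConst (one_le_ratioConst hc hα) (intConst_nonneg α3 c3)

/-- Below the scale `T₃ / c`, both `r` and `M r` lie in the range of the scaling condition. -/
theorem scale_lt {T3 : ℝ≥0∞} {M c r : ℝ} (hM : 1 ≤ M) (hMc : M ≤ c) (hr : 0 < r)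
    (h : T3 ≠ ⊤ → r < T3.toReal / c) (h0 : 0 < T3) :
    1 / T3 < ENNReal.ofReal (1 / (M * r)) ∧ 1 / T3 < ENNReal.ofReal (1 / r) := by
  have hM0 : 0 < M := by linarith
  have h2 : 1 / T3 < ENNReal.ofReal (1 / (M * r)) := by
    rcases eq_or_ne T3 ⊤ with rfl | hT
    · simp only [one_div, ENNReal.inv_top, ENNReal.ofReal_pos]; positivity
    · have hT0 : 0 < T3.toReal := ENNReal.toReal_pos h0.ne' hT
      have h3 := h hT
      rw [lt_div_iff₀ (by linarith)] at h3
      have h4 : M * r < T3.toReal := by nlinarith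
      have h5 : 1 / T3 = ENNReal.ofReal (1 / T3.toReal) := by
        rw [ENNReal.ofReal_div_of_pos hT0, ENNReal.ofReal_one, ENNReal.ofReal_toReal hT]
      rw [h5, ENNReal.ofReal_lt_ofReal_iff (by positivity)]
      exact one_div_lt_one_div_of_lt (by positivity) h4
  refine ⟨h2, h2.trans_le (ENNReal.ofReal_le_ofReal ?_)⟩
  exact one_div_le_one_div_of_le hr (by nlinarith)

/-- The lower bound below the scale `T₃ / c`. -/
theorem IsLevyPair.densityLower_short (h : IsLevyPair d A ν) (hd : 1 ≤ d) (b : Ed d) {α3 c3 : ℝ}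
    {T3 : ℝ≥0∞} (hc : 0 < c3) (hα : 0 < α3) (h0 : 0 < T3) (hC3 : CondC3 d A ν T3 c3 α3) {t r : ℝ}
    (ht : 0 < t) (hr : 0 < r) (hth : t * concFn d A ν r = 1)
    (hrT : T3 ≠ ⊤ → r < T3.toReal / shortConst d α3 c3) :
    DensityLower A ν b t r (shortConst d α3 c3) := by
  have hM := one_le_ratioConst (d := d) hc hα
  obtain ⟨h1, h2⟩ := scale_lt hM (ratioConst_le_shortConst hc hα) hr hrT h0
  obtain ⟨h3, h4⟩ := h.integral_exp_le hd hc hα hC3 ht hr hth h2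
  exact h.densityLower b ht hr hM (intConst_nonneg α3 c3) hth
    (h.concFn_ratio_le hc hα hC3 ht hr hth h1) h3 h4 le_rfl

/-- On a range of times bounded away from `0` and `∞` the scale `r` is comparable to `1`, and the
integrals are controlled by those at a single earlier time `t₁`. -/
theorem IsLevyPair.densityLower_long (h : IsLevyPair d A ν) {g : ℝ → ℝ}
    (hg : IsInvOn (concFn d A ν) g) (b : Ed d) {t1 r1 τ T : ℝ} (hr1 : 0 < r1) (hτ : 0 < τ)
    (hT : 0 < T)
    (hint : Integrable fun z : Ed d => (1 + r1 * ‖z‖) * Real.exp (-(t1 * rePsi d A ν z))) :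
    ∃ c : ℝ, 1 ≤ c ∧ ∀ t r : ℝ, 0 < t → t1 ≤ t → t < T → τ ≤ r → t * concFn d A ν r = 1 →
      DensityLower A ν b t r c := by
  have hgm := gaussMass_nonneg (d := d)
  set K := ∫ z : Ed d, (1 + r1 * ‖z‖) * Real.exp (-(t1 * rePsi d A ν z)) with hK
  have hK0 : 0 ≤ K := integral_nonneg fun z => by positivity
  set ρ := g (1 / T) with hρ
  have hρ0 : 0 < ρ := hg.pos _ (by positivity)
  set ε := 1 / (4 * (gaussMass d + 1)) with hε
  have hε0 : 0 < ε := by positivity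
  set R0 := g (ε / T) with hR0
  have hR00 : 0 < R0 := hg.pos _ (by positivity)
  set M := 1 + R0 / τ with hMdef
  have hM : 1 ≤ M := by
    have : 0 ≤ R0 / τ := by positivity
    linarith
  set C := (1 + ρ / r1) * K * ρ ^ d with hCdef
  refine ⟨lowerConst d M C, hM.trans (le_lowerConst hM (by positivity)),
    fun t r ht ht1 htT hτr hth => ?_⟩
  have hr : 0 < r := hτ.trans_le hτr
  have hrρ : r ≤ ρ := by
    refine (h.lt_of_concFn_lt hρ0 ?_).le
    rw [hρ, hg.right_inv _ (by positivity), eq_one_div_of_mul_eq_one_right hth]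
    exact one_div_lt_one_div_of_lt ht htT
  have hmeas : Measurable (rePsi d A ν) := by
    have h1 := Complex.measurable_re.comp (h.measurable_psiCent 1)
    have h2 : (fun x => (psiCent A ν 1 x).re) = rePsi d A ν := funext (h.re_psiCent one_pos)
    rwa [← h2]
  have hle : ∀ z : Ed d, (1 + r * ‖z‖) * Real.exp (-(t * rePsi d A ν z)) ≤
      (1 + ρ / r1) * ((1 + r1 * ‖z‖) * Real.exp (-(t1 * rePsi d A ν z))) := by
    intro z
    rw [← mul_assoc]
    have h1 := mul_le_mul_of_nonneg_right ht1 (h.rePsi_nonneg z)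
    have h2 : 1 + r * ‖z‖ ≤ (1 + ρ / r1) * (1 + r1 * ‖z‖) := by
      have h3 : (1 + ρ / r1) * (1 + r1 * ‖z‖) = 1 + ρ * ‖z‖ + ρ / r1 + r1 * ‖z‖ := by
        field_simp; ring
      have h4 : r * ‖z‖ ≤ ρ * ‖z‖ := by gcongr
      have h5 : 0 ≤ ρ / r1 := by positivity
      have h6 : 0 ≤ r1 * ‖z‖ := by positivity
      linarith
    gcongr
  have hi : Integrable (fun z : Ed d => (1 + r * ‖z‖) * Real.exp (-(t * rePsi d A ν z))) := by
    refine (hint.const_mul (1 + ρ / r1)).mono' (Measurable.aestronglyMeasurable (by fun_prop))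
      (Eventually.of_forall fun z => ?_)
    rw [Real.norm_of_nonneg (by positivity)]
    exact hle z
  have hbound : ∫ z : Ed d, (1 + r * ‖z‖) * Real.exp (-(t * rePsi d A ν z)) ≤ C * (r ^ d)⁻¹ := by
    refine (integral_mono hi (hint.const_mul _) hle).trans ?_
    rw [integral_const_mul, ← hK, hCdef, mul_assoc _ (ρ ^ d)]
    refine le_mul_of_one_le_right (by positivity) ?_
    rw [← div_eq_mul_inv, one_le_div (by positivity)]
    gcongr
  have htM : t * concFn d A ν (M * r) ≤ ε := by
    have h1 : R0 ≤ M * r := by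
      calc R0 = R0 / τ * τ := by field_simp
        _ ≤ M * r := by gcongr; linarith
    have h2 := h.concFn_anti hR00 h1
    rw [hR0, hg.right_inv _ (by positivity)] at h2
    calc t * concFn d A ν (M * r) ≤ T * (ε / T) :=
          mul_le_mul htT.le h2 concFn_nonneg hT.le
      _ = ε := by field_simp
  refine h.densityLower b ht hr hM (by positivity) hth ?_ hi hbound le_rfl
  calc 2 * (t * concFn d A ν (M * r)) * gaussMass d ≤ 2 * ε * gaussMass d := by gcongr
    _ ≤ 2 * ε * (gaussMass d + 1) := by gcongr; linarith
    _ = 1 / 2 := by rw [hε]; field_simp; norm_num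

end LowerBound

theorem stmt_13 (d : ℕ) (hd : 1 ≤ d) (α3 c3 : ℝ) (hα : 0 < α3 ∧ α3 ≤ 2)
    (hc : 0 < c3 ∧ c3 ≤ 1) :
    ∃ c : ℝ, 1 ≤ c ∧
      ∀ (A : Ed d →L[ℝ] Ed d) (ν : Measure (Ed d)) (b : Ed d) (hinv : ℝ → ℝ)
        (T3 : ℝ≥0∞), IsLevyPair d A ν → IsInvOn (concFn d A ν) hinv → 0 < T3 →
        CondC3 d A ν T3 c3 α3 →
        (∀ t : ℝ, 0 < t →
          ENNReal.ofReal t <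
            (if T3 = ⊤ then ⊤
             else ENNReal.ofReal (1 / concFn d A ν (T3.toReal / c))) →
          ∃ xt : Ed d, ‖xt‖ ≤ c * hinv (1 / t) ∧
            ∀ y : Ed d, ‖y‖ ≤ (1 / c) * hinv (1 / t) →
              (1 / c) * hinv (1 / t) ^ (-(d : ℤ)) ≤
                pdens d A ν b t (y + xt + t • bshift d ν b (hinv (1 / t)))) ∧
        (T3 ≠ ⊤ → ∀ T : ℝ, 0 < T → ∃ c' : ℝ, 1 ≤ c' ∧
          ∀ t : ℝ, 0 < t → t < T →
            ∃ xt : Ed d, ‖xt‖ ≤ c' * hinv (1 / t) ∧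
              ∀ y : Ed d, ‖y‖ ≤ (1 / c') * hinv (1 / t) →
                (1 / c') * hinv (1 / t) ^ (-(d : ℤ)) ≤
                  pdens d A ν b t (y + xt + t • bshift d ν b (hinv (1 / t)))) := by
  have hc0 := hc.1
  have hα0 := hα.1
  set c := shortConst d α3 c3 with hcdef
  have hc1 : 1 ≤ c := (one_le_ratioConst hc0 hα0).trans (ratioConst_le_shortConst hc0 hα0)
  refine ⟨c, hc1, fun A ν b g T3 h hg hT3 hC3 => ?_⟩
  have hth : ∀ t : ℝ, 0 < t → t * concFn d A ν (g (1 / t)) = 1 := by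
    intro t ht
    rw [hg.right_inv _ (by positivity)]; field_simp
  have short : ∀ t : ℝ, 0 < t → (T3 ≠ ⊤ → t < 1 / concFn d A ν (T3.toReal / c)) →
      DensityLower A ν b t (g (1 / t)) c := by
    intro t ht htT
    refine h.densityLower_short hd b hc0 hα0 hT3 hC3 ht (hg.pos _ (by positivity)) (hth t ht) ?_
    intro hne
    have hτ : 0 < T3.toReal / c := div_pos (ENNReal.toReal_pos hT3.ne' hne) (by linarith)
    refine h.lt_of_concFn_lt hτ ?_
    rw [hg.right_inv _ (by positivity), lt_one_div (hg.concFn_pos h hτ) ht]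
    exact htT hne
  refine ⟨fun t ht htT => short t ht fun hne => ?_, fun hne T hT => ?_⟩
  · rw [if_neg hne] at htT
    exact (ENNReal.ofReal_lt_ofReal_iff_of_nonneg ht.le).1 htT
  · set τ := T3.toReal / c with hτdef
    have hτ : 0 < τ := div_pos (ENNReal.toReal_pos hT3.ne' hne) (by linarith)
    have hhτ := hg.concFn_pos h hτ
    -- `t₁` lies strictly inside the range of the short-time bound
    set t1 := 1 / concFn d A ν τ / 2 with ht1
    have ht10 : 0 < t1 := by positivity
    have ht1' : t1 < 1 / concFn d A ν τ := half_lt_self (by positivity)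
    have hr1 : 0 < g (1 / t1) := hg.pos _ (by positivity)
    have hr1τ : g (1 / t1) < τ := by
      refine h.lt_of_concFn_lt hτ ?_
      rwa [hg.right_inv _ (by positivity), lt_one_div hhτ ht10]
    have hscale := scale_lt le_rfl hc1 hr1 (fun _ => hr1τ) hT3
    obtain ⟨c2, hc21, hc2⟩ := h.densityLower_long hg b hr1 hτ hT
      (h.integral_exp_le hd hc0 hα0 hC3 ht10 hr1 (hth t1 ht10) hscale.2).1
    refine ⟨max c c2, hc1.trans (le_max_left _ _), fun t ht htT => ?_⟩
    have hr : 0 < g (1 / t) := hg.pos _ (by positivity)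
    rcases lt_or_ge t (1 / concFn d A ν τ) with hlt | hge
    · exact (short t ht fun _ => hlt).mono (by linarith) (le_max_left _ _) hr
    · have hτr : τ ≤ g (1 / t) := by
        by_contra! hlt
        have h1 := hg.concFn_strictAnti h hr hlt
        rw [hg.right_inv _ (by positivity), lt_one_div hhτ ht] at h1
        linarith
      exact (hc2 t _ ht (ht1'.le.trans hge) htT hτr (hth t ht)).mono (by linarith)
        (le_max_right _ _) hr

end
end

section
/- (i) det A ≠ 0 if and only if condition (C3) holds and A ≠ 0. (ii) If det A ≠ 0 and ∫_{ℝ^d} |z|² ν(dz) < ∞, then condition (C3) holds with T₃ = ∞. -/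
/-!
The Gaussian part `⟪x, A x⟫` of `Re ψ` is quadratic, while the jump part
`∫ (1 - cos ⟪x, z⟫) ν(dz)` is nonnegative, is `O(|x|² ∨ 1)`, and is `o(t²)` along every ray
`t ↦ t v`.

If `det A ≠ 0`, then `⟪x, A x⟫ ≥ a |x|²` with `a > 0` by compactness of the unit sphere
(`exists_lower_bound`), so `a |x|² ≤ Re ψ(x) ≤ C |x|²` for `|x| ≥ 1` (`rePsi_le`), and even for all
`x` when `ν` has a finite second moment (`rePsi_le_of_integrable_sq`). Such a two-sided quadratic
bound yields (C3) with `α₃ = 2` and `c₃ = a / (C + a)` (`condC3_of_quadratic`).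

Conversely, if `A ≠ 0` then `⟪u, A u⟫ > 0` for some unit vector `u`, hence `ψ*(r)` grows at least
quadratically, and the first half of (C3) forces `Re ψ(t v)` to grow quadratically for every unit
vector `v`. A unit vector `v` in the kernel of `A` contradicts this, because there only the jump
part is left and `Re ψ(t v) = o(t²)` by dominated convergence (`tendsto_rePsi_div_sq`).
-/

open MeasureTheory Filter Set
open scoped RealInnerProductSpace ENNReal Topology

noncomputable section

/-! ### The Gaussian form -/

/-- For a nonnegative form, `x` is isotropic only if it lies in the kernel: test the form at
`x + t A x` and minimise over `t`. -/
lemma apply_eq_zero_of_inner_eq_zero {d : ℕ} {A : Ed d →L[ℝ] Ed d}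
    (symm : ∀ x y : Ed d, ⟪A x, y⟫ = ⟪x, A y⟫) (nonneg : ∀ x : Ed d, 0 ≤ ⟪x, A x⟫)
    {x : Ed d} (hx : ⟪x, A x⟫ = 0) : A x = 0 := by
  set q := ⟪A x, A (A x)⟫ with hq
  have hq0 : 0 ≤ q := nonneg (A x)
  set n := ⟪A x, A x⟫ with hn
  have hn0 : 0 ≤ n := real_inner_self_nonneg
  have key : ∀ t : ℝ, 0 ≤ 2 * t * n + t ^ 2 * q := by
    intro t
    have h := nonneg (x + t • A x)
    have h2 : ⟪x, A (A x)⟫ = n := by rw [← symm]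
    simp only [map_add, map_smul, inner_add_left, inner_add_right, inner_smul_left,
      inner_smul_right, hx, h2, ← hn, ← hq] at h
    simp only [conj_trivial] at h
    linarith
  have hn' : n = 0 := by
    -- the quadratic is minimal at `-n / q`; `q + 1` avoids dividing by zero
    have h3 := key (-(n / (q + 1)))
    have h4 : 2 * -(n / (q + 1)) * n + (-(n / (q + 1))) ^ 2 * q
        = -(n ^ 2 * (q + 2)) / (q + 1) ^ 2 := by
      field_simp
      ring
    rw [h4, le_div_iff₀ (by positivity)] at h3
    have : n ^ 2 * (q + 2) ≤ 0 := by linarith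
    by_contra hne
    have : 0 < n ^ 2 * (q + 2) := by positivity
    linarith
  exact inner_self_eq_zero.mp hn'

lemma exists_lower_bound {d : ℕ} (hd : 1 ≤ d) {A : Ed d →L[ℝ] Ed d}
    (symm : ∀ x y : Ed d, ⟪A x, y⟫ = ⟪x, A y⟫) (nonneg : ∀ x : Ed d, 0 ≤ ⟪x, A x⟫)
    (hdet : LinearMap.det (A : Ed d →ₗ[ℝ] Ed d) ≠ 0) :
    ∃ a : ℝ, 0 < a ∧ ∀ x : Ed d, a * ‖x‖ ^ 2 ≤ ⟪x, A x⟫ := by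
  have : Nonempty (Fin d) := ⟨⟨0, hd⟩⟩
  have hker : LinearMap.ker (A : Ed d →ₗ[ℝ] Ed d) = ⊥ := by
    by_contra h
    exact hdet (LinearMap.det_eq_zero_iff_ker_ne_bot.mpr h)
  obtain ⟨u, hu, hmin⟩ := (isCompact_sphere (0 : Ed d) 1).exists_isMinOn
    (NormedSpace.sphere_nonempty.mpr zero_le_one)
    (f := fun x : Ed d => ⟪x, A x⟫) (by fun_prop)
  have hu1 : ‖u‖ = 1 := by simpa using hu
  refine ⟨⟪u, A u⟫, lt_of_le_of_ne (nonneg u) (fun h => ?_), fun x => ?_⟩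
  · have h0 := apply_eq_zero_of_inner_eq_zero symm nonneg h.symm
    have : u ∈ LinearMap.ker (A : Ed d →ₗ[ℝ] Ed d) := by simpa using h0
    rw [hker, Submodule.mem_bot] at this
    simp [this] at hu1
  · by_cases hx : x = 0
    · simp [hx]
    have hx' : 0 < ‖x‖ := norm_pos_iff.mpr hx
    have h := hmin (show (‖x‖⁻¹ • x) ∈ Metric.sphere (0 : Ed d) 1 by
      simp [norm_smul, hx'.ne'])
    simp only [mem_ofPred_eq, map_smul, inner_smul_left, inner_smul_right, conj_trivial] at h
    calc ⟪u, A u⟫ * ‖x‖ ^ 2 ≤ (‖x‖⁻¹ * (‖x‖⁻¹ * ⟪x, A x⟫)) * ‖x‖ ^ 2 := by gcongr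
      _ = ⟪x, A x⟫ := by field_simp

/-! ### Upper bounds on `Re ψ` -/

lemma one_sub_cos_inner_le_sq {d : ℕ} (x z : Ed d) :
    1 - Real.cos ⟪x, z⟫ ≤ ‖x‖ ^ 2 * ‖z‖ ^ 2 := by
  have h1 := Real.one_sub_sq_div_two_le_cos (x := ⟪x, z⟫)
  have h2 : ⟪x, z⟫ ^ 2 ≤ (‖x‖ * ‖z‖) ^ 2 :=
    sq_le_sq' (neg_le_of_abs_le (abs_real_inner_le_norm x z)) (real_inner_le_norm x z)
  rw [mul_pow] at h2
  nlinarith [sq_nonneg ⟪x, z⟫]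

lemma one_sub_cos_inner_le {d : ℕ} (x z : Ed d) :
    1 - Real.cos ⟪x, z⟫ ≤ 2 * max 1 (‖x‖ ^ 2) * min 1 (‖z‖ ^ 2) := by
  rcases le_total 1 (‖z‖ ^ 2) with h | h
  · rw [min_eq_left h]
    linarith [Real.neg_one_le_cos ⟪x, z⟫, le_max_left 1 (‖x‖ ^ 2)]
  · rw [min_eq_right h]
    have h1 := one_sub_cos_inner_le_sq x z
    have h2 : ‖x‖ ^ 2 * ‖z‖ ^ 2 ≤ max 1 (‖x‖ ^ 2) * ‖z‖ ^ 2 := by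
      gcongr
      exact le_max_right _ _
    nlinarith [sq_nonneg (‖x‖ * ‖z‖)]

lemma inner_apply_le {d : ℕ} (A : Ed d →L[ℝ] Ed d) (x : Ed d) :
    ⟪x, A x⟫ ≤ ‖A‖ * ‖x‖ ^ 2 := by
  calc ⟪x, A x⟫ ≤ ‖x‖ * ‖A x‖ := real_inner_le_norm _ _
    _ ≤ ‖x‖ * (‖A‖ * ‖x‖) := by gcongr; exact A.le_opNorm x
    _ = ‖A‖ * ‖x‖ ^ 2 := by ring

lemma inner_le_rePsi {d : ℕ} (A : Ed d →L[ℝ] Ed d) (ν : Measure (Ed d)) (x : Ed d) :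
    ⟪x, A x⟫ ≤ rePsi d A ν x := by
  have : 0 ≤ ∫ z, (1 - Real.cos ⟪x, z⟫) ∂ν :=
    integral_nonneg fun z => sub_nonneg.mpr (Real.cos_le_one _)
  simp only [rePsi]
  linarith

lemma rePsi_le {d : ℕ} (A : Ed d →L[ℝ] Ed d) {ν : Measure (Ed d)}
    (hν : Integrable (fun z : Ed d => min 1 (‖z‖ ^ 2)) ν) (x : Ed d) :
    rePsi d A ν x ≤ (‖A‖ + 2 * ∫ z, min 1 (‖z‖ ^ 2) ∂ν) * max 1 (‖x‖ ^ 2) := by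
  have h1 : ∫ z, (1 - Real.cos ⟪x, z⟫) ∂ν
      ≤ ∫ z, 2 * max 1 (‖x‖ ^ 2) * min 1 (‖z‖ ^ 2) ∂ν :=
    integral_mono_of_nonneg (ae_of_all _ fun z => sub_nonneg.mpr (Real.cos_le_one _))
      (hν.const_mul _) (ae_of_all _ fun z => one_sub_cos_inner_le x z)
  rw [integral_const_mul] at h1
  have h2 : ‖A‖ * ‖x‖ ^ 2 ≤ ‖A‖ * max 1 (‖x‖ ^ 2) := by
    gcongr
    exact le_max_right _ _
  have h3 := inner_apply_le A x
  simp only [rePsi]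
  linarith

lemma rePsi_le_of_integrable_sq {d : ℕ} (A : Ed d →L[ℝ] Ed d) {ν : Measure (Ed d)}
    (hν : Integrable (fun z : Ed d => ‖z‖ ^ 2) ν) (x : Ed d) :
    rePsi d A ν x ≤ (‖A‖ + ∫ z, ‖z‖ ^ 2 ∂ν) * ‖x‖ ^ 2 := by
  have h1 : ∫ z, (1 - Real.cos ⟪x, z⟫) ∂ν ≤ ∫ z, ‖x‖ ^ 2 * ‖z‖ ^ 2 ∂ν :=
    integral_mono_of_nonneg (ae_of_all _ fun z => sub_nonneg.mpr (Real.cos_le_one _))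
      (hν.const_mul _) (ae_of_all _ fun z => one_sub_cos_inner_le_sq x z)
  rw [integral_const_mul] at h1
  have h3 := inner_apply_le A x
  simp only [rePsi]
  linarith

/-! ### Quadratic bounds and (C3) -/

/-- The supremum defining `ψ*` is a genuine one: `Re ψ` is bounded on balls. -/
lemma le_psiStar {d : ℕ} (A : Ed d →L[ℝ] Ed d) {ν : Measure (Ed d)}
    (hν : Integrable (fun z : Ed d => min 1 (‖z‖ ^ 2)) ν) {x : Ed d} {r : ℝ} (hx : ‖x‖ ≤ r) :
    rePsi d A ν x ≤ psiStar d A ν r := by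
  refine le_csSup ⟨(‖A‖ + 2 * ∫ z, min 1 (‖z‖ ^ 2) ∂ν) * max 1 (r ^ 2), ?_⟩
    ⟨x, by simpa using hx, rfl⟩
  rintro _ ⟨y, hy, rfl⟩
  have hy' : ‖y‖ ≤ r := by simpa using hy
  have h0 : 0 ≤ ∫ z, min 1 (‖z‖ ^ 2) ∂ν :=
    integral_nonneg fun z : Ed d => le_min zero_le_one (sq_nonneg ‖z‖)
  refine (rePsi_le A hν y).trans ?_
  gcongr

/-- A two-sided quadratic bound on `Re ψ`, the upper one being relaxed to `C * (s ∨ |x|²)`, gives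
(C3) with `α₃ = 2` beyond the threshold where `s ≤ r²`. -/
lemma condC3_of_quadratic {d : ℕ} (hd : 1 ≤ d) {A : Ed d →L[ℝ] Ed d} {ν : Measure (Ed d)}
    (hν : Integrable (fun z : Ed d => min 1 (‖z‖ ^ 2)) ν) {a C s : ℝ} {T : ℝ≥0∞}
    (ha : 0 < a) (hC : 0 ≤ C)
    (hlow : ∀ x : Ed d, a * ‖x‖ ^ 2 ≤ rePsi d A ν x)
    (hup : ∀ x : Ed d, rePsi d A ν x ≤ C * max s (‖x‖ ^ 2))
    (hs : ∀ r : ℝ, 1 / T < ENNReal.ofReal r → s ≤ r ^ 2) :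
    ∃ c3 α3 : ℝ, 0 < c3 ∧ c3 ≤ 1 ∧ 0 < α3 ∧ α3 ≤ 2 ∧ CondC3 d A ν T c3 α3 := by
  have : Nonempty (Fin d) := ⟨⟨0, hd⟩⟩
  -- enlarging `C` to `C + a` keeps the constant `c₃ = a / (C + a)` at most `1`
  have hstar : ∀ r : ℝ, 0 ≤ r → 1 / T < ENNReal.ofReal r →
      psiStar d A ν r ≤ (C + a) * r ^ 2 := by
    intro r hr hrT
    refine csSup_le ⟨_, 0, by simpa using hr, rfl⟩ ?_
    rintro _ ⟨y, hy, rfl⟩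
    have hy' : ‖y‖ ≤ r := by simpa using hy
    calc rePsi d A ν y ≤ C * max s (‖y‖ ^ 2) := hup y
      _ ≤ C * r ^ 2 := by
        gcongr
        exact max_le (hs r hrT) (by gcongr)
      _ ≤ (C + a) * r ^ 2 := by nlinarith [sq_nonneg r]
  have hc : ∀ r : ℝ, 0 ≤ r → 1 / T < ENNReal.ofReal r →
      a / (C + a) * psiStar d A ν r ≤ a * r ^ 2 := by
    intro r hr hrT
    calc a / (C + a) * psiStar d A ν r ≤ a / (C + a) * ((C + a) * r ^ 2) := by
          gcongr
          exact hstar r hr hrT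
      _ = a * r ^ 2 := by field_simp
  refine ⟨a / (C + a), 2, by positivity, (div_le_one (by positivity)).mpr (by linarith),
    two_pos, le_rfl, fun x hx => (hc _ (norm_nonneg x) hx).trans (hlow x), ?_⟩
  intro lam r hlam hr hrT
  have hlr : 0 ≤ lam * r := by positivity
  obtain ⟨y, hy⟩ := exists_norm_eq (Ed d) hlr
  rw [Real.rpow_two]
  calc a / (C + a) * lam ^ 2 * psiStar d A ν r
      = lam ^ 2 * (a / (C + a) * psiStar d A ν r) := by ring
    _ ≤ lam ^ 2 * (a * r ^ 2) := by
        exact mul_le_mul_of_nonneg_left (hc r hr.le hrT) (sq_nonneg lam)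
    _ = a * ‖y‖ ^ 2 := by rw [hy]; ring
    _ ≤ rePsi d A ν y := hlow y
    _ ≤ psiStar d A ν (lam * r) := le_psiStar A hν hy.le

/-! ### Growth along the kernel of `A` -/

/-- Along a direction in the kernel of `A`, the growth of `Re ψ` is subquadratic. -/
lemma tendsto_rePsi_div_sq {d : ℕ} {A : Ed d →L[ℝ] Ed d} {ν : Measure (Ed d)}
    (hν : Integrable (fun z : Ed d => min 1 (‖z‖ ^ 2)) ν) {v : Ed d} (hv : ‖v‖ = 1)
    (hAv : A v = 0) :
    Tendsto (fun t : ℝ => rePsi d A ν (t • v) / t ^ 2) atTop (𝓝 0) := by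
  have heq : ∀ t : ℝ, rePsi d A ν (t • v) / t ^ 2
      = ∫ z, (1 - Real.cos ⟪t • v, z⟫) / t ^ 2 ∂ν := by
    intro t
    rw [integral_div]
    simp [rePsi, hAv]
  simp_rw [heq]
  have h0 : (0 : ℝ) = ∫ _z : Ed d, (0 : ℝ) ∂ν := by simp
  rw [h0]
  refine tendsto_integral_filter_of_dominated_convergence
    (fun z => 2 * min 1 (‖z‖ ^ 2)) ?_ ?_ (hν.const_mul 2) ?_
  · exact Eventually.of_forall fun t => (by fun_prop : Continuous
      fun z : Ed d => (1 - Real.cos ⟪t • v, z⟫) / t ^ 2).aestronglyMeasurable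
  · filter_upwards [eventually_ge_atTop (1 : ℝ)] with t ht
    refine ae_of_all _ fun z => ?_
    have hn : 0 ≤ 1 - Real.cos ⟪t • v, z⟫ := sub_nonneg.mpr (Real.cos_le_one _)
    have hnorm : ‖t • v‖ ^ 2 = t ^ 2 := by simp [norm_smul, hv]
    have h := one_sub_cos_inner_le (t • v) z
    rw [hnorm, max_eq_right (one_le_pow₀ ht)] at h
    rw [Real.norm_of_nonneg (by positivity), div_le_iff₀ (by positivity)]
    linarith
  · refine ae_of_all _ fun z => ?_
    have hlim : Tendsto (fun t : ℝ => 2 / t ^ 2) atTop (𝓝 0) :=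
      tendsto_const_nhds.div_atTop (tendsto_pow_atTop two_ne_zero)
    refine squeeze_zero (fun t => div_nonneg (sub_nonneg.mpr (Real.cos_le_one _)) (sq_nonneg t))
      (fun t => ?_) hlim
    have := Real.neg_one_le_cos ⟪t • v, z⟫
    gcongr
    linarith

/-! ### The characterisation -/

theorem stmt_15 (d : ℕ) (hd : 1 ≤ d) (A : Ed d →L[ℝ] Ed d) (ν : Measure (Ed d))
    (b : Ed d) (hpair : IsLevyPair d A ν) :
    (LinearMap.det (A : Ed d →ₗ[ℝ] Ed d) ≠ 0 ↔
      (∃ (T3 : ℝ≥0∞) (c3 α3 : ℝ), 0 < T3 ∧ 0 < c3 ∧ c3 ≤ 1 ∧ 0 < α3 ∧ α3 ≤ 2 ∧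
        CondC3 d A ν T3 c3 α3) ∧ A ≠ 0) ∧
    (LinearMap.det (A : Ed d →ₗ[ℝ] Ed d) ≠ 0 →
      (∫⁻ z, ENNReal.ofReal (‖z‖ ^ 2) ∂ν) ≠ ⊤ →
      ∃ c3 α3 : ℝ, 0 < c3 ∧ c3 ≤ 1 ∧ 0 < α3 ∧ α3 ≤ 2 ∧ CondC3 d A ν ⊤ c3 α3) := by
  obtain ⟨symm, nonneg, -, hν, -⟩ := hpair
  refine ⟨⟨fun hdet => ?_, ?_⟩, fun hdet hfin => ?_⟩
  · obtain ⟨a, ha, hlow⟩ := exists_lower_bound hd symm nonneg hdet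
    have hI : 0 ≤ ∫ z, min 1 (‖z‖ ^ 2) ∂ν :=
      integral_nonneg fun z : Ed d => le_min zero_le_one (sq_nonneg ‖z‖)
    obtain ⟨c, α, h⟩ := condC3_of_quadratic (T := 1) hd hν ha
      (by positivity : 0 ≤ ‖A‖ + 2 * ∫ z, min 1 (‖z‖ ^ 2) ∂ν)
      (fun x => (hlow x).trans (inner_le_rePsi A ν x)) (rePsi_le A hν) (by
        intro r hr
        rw [div_one, ENNReal.one_lt_ofReal] at hr
        exact one_le_pow₀ hr.le)
    refine ⟨⟨1, c, α, one_pos, h⟩, ?_⟩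
    rintro rfl
    have : Nonempty (Fin d) := ⟨⟨0, hd⟩⟩
    obtain ⟨y, hy⟩ := exists_norm_eq (Ed d) zero_le_one
    have := hlow y
    simp [hy] at this
    linarith
  · rintro ⟨⟨T, c, α, hT, hc, -, -, -, hC3, -⟩, hA⟩ hdet
    obtain ⟨w, hw⟩ : ∃ w, A w ≠ 0 := by
      by_contra! h
      exact hA (ContinuousLinearMap.ext h)
    have hw0 : 0 < ‖w‖ := norm_pos_iff.mpr fun h => hw (by simp [h])
    have hq : 0 < ⟪w, A w⟫ := lt_of_le_of_ne (nonneg w) fun h =>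
      hw (apply_eq_zero_of_inner_eq_zero symm nonneg h.symm)
    obtain ⟨v', hv', hv'0⟩ := Submodule.exists_mem_ne_zero_of_ne_bot
      (LinearMap.det_eq_zero_iff_ker_ne_bot.mp hdet)
    have hAv' : A v' = 0 := by simpa using hv'
    have hv : ‖(‖v'‖⁻¹ • v')‖ = 1 := by
      simp [norm_smul, (norm_pos_iff.mpr hv'0).ne']
    set v := ‖v'‖⁻¹ • v' with hvdef
    have hAv : A v = 0 := by simp [hvdef, hAv']
    set κ := ⟪w, A w⟫ / ‖w‖ ^ 2 with hκ
    have hκ0 : 0 < κ := by positivity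
    have hTfin : 1 / T ≠ ⊤ := by simp [hT.ne']
    have hge : ∀ᶠ t : ℝ in atTop, c * κ ≤ rePsi d A ν (t • v) / t ^ 2 := by
      filter_upwards [eventually_gt_atTop (0 : ℝ), eventually_gt_atTop (1 / T).toReal]
        with t ht htT
      have hnorm : ‖t • v‖ = t := by simp [norm_smul, hv, ht.le]
      have h1 := hC3 (t • v) (by
        rw [hnorm]
        exact (ENNReal.lt_ofReal_iff_toReal_lt hTfin).mpr htT)
      rw [hnorm] at h1
      -- the multiple of `w` of norm `t` bounds `ψ*(t)` from below by `κ t²`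
      have h2 : κ * t ^ 2 ≤ psiStar d A ν t := by
        have hwt : ‖(t / ‖w‖) • w‖ ≤ t := by
          rw [norm_smul, Real.norm_of_nonneg (by positivity)]
          exact (div_mul_cancel₀ t hw0.ne').le
        refine le_trans ?_ (le_psiStar A hν hwt)
        refine le_trans (le_of_eq ?_) (inner_le_rePsi A ν _)
        simp only [map_smul, inner_smul_left, inner_smul_right, conj_trivial, hκ]
        field_simp
      rw [le_div_iff₀ (by positivity)]
      calc c * κ * t ^ 2 = c * (κ * t ^ 2) := by ring
        _ ≤ c * psiStar d A ν t := by gcongr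
        _ ≤ _ := h1
    have := ge_of_tendsto (tendsto_rePsi_div_sq hν hv hAv) hge
    have : 0 < c * κ := by positivity
    linarith
  · obtain ⟨a, ha, hlow⟩ := exists_lower_bound hd symm nonneg hdet
    have hsq : Integrable (fun z : Ed d => ‖z‖ ^ 2) ν :=
      (lintegral_ofReal_ne_top_iff_integrable
        (by fun_prop : Continuous fun z : Ed d => ‖z‖ ^ 2).aestronglyMeasurable
        (ae_of_all _ fun z => sq_nonneg _)).mp hfin
    have hI : 0 ≤ ∫ z, ‖z‖ ^ 2 ∂ν := integral_nonneg fun z => sq_nonneg _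
    refine condC3_of_quadratic (s := 0) hd hν ha
      (by positivity : 0 ≤ ‖A‖ + ∫ z, ‖z‖ ^ 2 ∂ν)
      (fun x => (hlow x).trans (inner_le_rePsi A ν x)) (fun x => ?_) (fun r _ => sq_nonneg r)
    rw [max_eq_right (sq_nonneg _)]
    exact rePsi_le_of_integrable_sq A hsq x

end
end
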